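/- arXiv:2404.04680 — 7 statements merged into one kernel-verified Lean document; each statement's English description precedes it below -/
import Mathlib

section
/- Let G be a connected bipartite graph with parts V₁ and V₂ such that every vertex of V₁ has degree r ≥ 2 and every vertex of V₂ has degree s ≥ 2, with (r−1)(s−1) ≥ 2. If the diameter of G is at most 2m+1 (for an integer m ≥ 1), then |V₁| ≤ 1 + r(s−1)·∑_{i=0}^{m−1} ((r−1)(s−1))^i. -/
/-!
Fix a vertex `c` of `A`. Every vertex at distance `k + 1` from `c` has a neighbour at distance `k`,
so a vertex of degree `d` at distance `k + 1` has at most `d - 1` neighbours at distance `k + 2`.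
The spheres around `c` lie alternately in `A` and `B`, hence from one sphere inside `A` to the next
the size grows by a factor of at most `(r - 1) * (s - 1)`, except for the first step from `c`, where
the factor is `r * (s - 1)`. A ball of radius `2 * m + 1` meets `A` in the spheres of even radius at
most `2 * m`, and the bound is the sum of their sizes.
-/

open Finset SimpleGraph

theorem encard_biUnion_le_encard_mul {ι α : Type*} {s : Set ι} {f : ι → Set α} {n : ℕ∞}
    (h : ∀ i ∈ s, (f i).encard ≤ n) : (⋃ i ∈ s, f i).encard ≤ s.encard * n := by
  rcases s.finite_or_infinite with hs | hs
  · lift s to Finset ι using hs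
    calc (⋃ i ∈ s, f i).encard ≤ ∑ i ∈ s, (f i).encard := s.set_encard_biUnion_le f
      _ ≤ s.card • n := sum_le_card_nsmul s _ n h
      _ = (s : Set ι).encard * n := by rw [Set.encard_coe_eq_coe_finsetCard, nsmul_eq_mul]
  · rcases eq_or_ne n 0 with rfl | hn
    · simp_all
    · rw [hs.encard_eq, ENat.top_mul hn]
      exact le_top

section Sphere

variable {V : Type*} {G : SimpleGraph V} {c u w : V} {k : ℕ}

/-- The sphere of radius `k` around `c` in the graph `G`. It is defined by the extended distance, so
that vertices not reachable from `c` lie on no sphere. -/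
def edistSphere (G : SimpleGraph V) (c : V) (k : ℕ) : Set V :=
  {v | G.edist v c = k}

theorem mem_edistSphere : u ∈ edistSphere G c k ↔ G.edist u c = k := .rfl

theorem edistSphere_zero (c : V) : edistSphere G c 0 = {c} := by
  ext u
  simp [mem_edistSphere]

theorem edistSphere_one (c : V) : edistSphere G c 1 = G.neighborSet c := by
  ext u
  simp [mem_edistSphere, edist_eq_one_iff_adj, G.adj_comm]

theorem exists_adj_mem_edistSphere (hu : u ∈ edistSphere G c (k + 1)) :
    ∃ w, G.Adj u w ∧ w ∈ edistSphere G c k := by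
  rw [mem_edistSphere] at hu
  obtain ⟨p, hp⟩ := exists_walk_of_edist_eq_coe hu
  cases p with
  | nil => simp at hp
  | @cons _ w _ huw q =>
    rw [Walk.length_cons, Nat.add_right_cancel_iff] at hp
    refine ⟨w, huw, le_antisymm (hp ▸ edist_le q) ?_⟩
    have htri : G.edist u c ≤ G.edist u w + G.edist w c := G.edist_triangle
    rw [hu, edist_eq_one_iff_adj.mpr huw, add_comm 1, Nat.cast_add_one] at htri
    exact (ENat.add_le_add_iff_right ENat.one_ne_top).mp htri

variable [G.LocallyFinite]

theorem encard_neighborSet (v : V) : (G.neighborSet v).encard = G.degree v := by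
  rw [← coe_neighborFinset, Set.encard_coe_eq_coe_finsetCard, card_neighborFinset_eq_degree]

theorem encard_neighborSet_inter_edistSphere_le (hw : w ∈ edistSphere G c (k + 1)) :
    (G.neighborSet w ∩ edistSphere G c (k + 2)).encard ≤ (G.degree w - 1 : ℕ) := by
  obtain ⟨x, hwx, hx⟩ := exists_adj_mem_edistSphere hw
  have hsub : G.neighborSet w ∩ edistSphere G c (k + 2) ⊆ G.neighborSet w \ {x} := by
    rintro u ⟨hwu, hu⟩
    refine ⟨hwu, ?_⟩
    rintro rfl
    have : (k + 2 : ℕ) = (k : ℕ∞) := hu.symm.trans hx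
    norm_cast at this
    omega
  calc (G.neighborSet w ∩ edistSphere G c (k + 2)).encard
      ≤ (G.neighborSet w \ {x}).encard := Set.encard_le_encard hsub
    _ = (G.degree w - 1 : ℕ) := by
      rw [Set.encard_sdiff_singleton_of_mem ((G.mem_neighborSet w x).mpr hwx), encard_neighborSet,
        ENat.natCast_sub, Nat.cast_one]

theorem encard_edistSphere_add_two_le {d : ℕ}
    (hd : ∀ w ∈ edistSphere G c (k + 1), G.degree w ≤ d) :
    (edistSphere G c (k + 2)).encard ≤ (edistSphere G c (k + 1)).encard * (d - 1 : ℕ) := by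
  have hcover : edistSphere G c (k + 2) ⊆
      ⋃ w ∈ edistSphere G c (k + 1), G.neighborSet w ∩ edistSphere G c (k + 2) := by
    intro u hu
    obtain ⟨w, huw, hw⟩ := exists_adj_mem_edistSphere hu
    exact Set.mem_biUnion hw ⟨huw.symm, hu⟩
  refine (Set.encard_le_encard hcover).trans (encard_biUnion_le_encard_mul fun w hw ↦ ?_)
  grw [encard_neighborSet_inter_edistSphere_le hw, hd w hw]

theorem encard_edistSphere_succ_le_mul_prod {d : ℕ → ℕ}
    (hd : ∀ j, ∀ w ∈ edistSphere G c j, G.degree w ≤ d j) (k : ℕ) :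
    (edistSphere G c (k + 1)).encard ≤ (d 0 * ∏ j ∈ range k, (d (j + 1) - 1) : ℕ) := by
  induction k with
  | zero =>
    have hc : c ∈ edistSphere G c 0 := by simp [edistSphere_zero]
    simpa [edistSphere_one, encard_neighborSet] using hd 0 c hc
  | succ k ih =>
    grw [encard_edistSphere_add_two_le (hd (k + 1)), ih, prod_range_succ, ← mul_assoc,
      Nat.cast_mul _ (d (k + 1) - 1)]

end Sphere

section Bipartite

variable {V : Type*} {G : SimpleGraph V} {A B : Set V} {c : V}

theorem edistSphere_subset_of_isBipartiteWith (hG : G.IsBipartiteWith A B) (hc : c ∈ A) (k : ℕ) :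
    edistSphere G c k ⊆ if Even k then A else B := by
  induction k with
  | zero => simpa [edistSphere_zero] using hc
  | succ k ih =>
    intro u hu
    obtain ⟨w, huw, hw⟩ := exists_adj_mem_edistSphere hu
    have hwk := ih hw
    by_cases hk : Even k
    · rw [if_pos hk] at hwk
      rw [if_neg (by simpa [Nat.even_add_one] using hk)]
      exact hG.mem_of_mem_adj hwk huw.symm
    · rw [if_neg hk] at hwk
      rw [if_pos (Nat.even_add_one.mpr hk)]
      exact hG.symm.mem_of_mem_adj hwk huw.symm

theorem inter_ball_subset_biUnion_edistSphere (hG : G.IsBipartiteWith A B) (hc : c ∈ A) (m : ℕ) :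
    A ∩ G.ball c (2 * m + 2 : ℕ) ⊆ ⋃ i ∈ range (m + 1), edistSphere G c (2 * i) := by
  rintro u ⟨huA, hu⟩
  rw [mem_ball] at hu
  obtain ⟨k, hk⟩ := ENat.ne_top_iff_exists.mp hu.ne_top
  have huk : u ∈ edistSphere G c k := hk.symm
  have hk_even : Even k := by
    by_contra hodd
    have huB := edistSphere_subset_of_isBipartiteWith hG hc k huk
    rw [if_neg hodd] at huB
    exact Set.disjoint_left.mp hG.disjoint huA huB
  obtain ⟨i, rfl⟩ := hk_even.exists_two_nsmul
  rw [← hk, Nat.cast_lt, smul_eq_mul] at hu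
  exact Set.mem_biUnion (mem_coe.mpr (mem_range.mpr (by omega))) huk

variable [G.LocallyFinite] {r s : ℕ}

theorem encard_edistSphere_two_mul_add_two_le (hG : G.IsBipartiteWith A B)
    (hA : ∀ v ∈ A, G.degree v ≤ r) (hB : ∀ v ∈ B, G.degree v ≤ s) (hc : c ∈ A) (i : ℕ) :
    (edistSphere G c (2 * i + 2)).encard ≤ (r * (s - 1) * ((r - 1) * (s - 1)) ^ i : ℕ) := by
  let d (j : ℕ) : ℕ := if Even j then r else s
  have hd : ∀ j, ∀ w ∈ edistSphere G c j, G.degree w ≤ d j := by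
    intro j w hw
    have hwj := edistSphere_subset_of_isBipartiteWith hG hc j hw
    by_cases hj : Even j
    · simpa only [d, if_pos hj] using hA w (by simpa only [if_pos hj] using hwj)
    · simpa only [d, if_neg hj] using hB w (by simpa only [if_neg hj] using hwj)
  have hprod : ∏ j ∈ range (2 * i + 1), (d (j + 1) - 1) = (s - 1) * ((r - 1) * (s - 1)) ^ i := by
    induction i with
    | zero => simp [d]
    | succ i ih =>
      have hr : d (2 * i + 1 + 1) = r := if_pos (by grind)
      have hs : d (2 * i + 1 + 1 + 1) = s := if_neg (by grind)
      rw [Nat.mul_add_one, prod_range_succ, prod_range_succ, ih, hr, hs]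
      ring
  calc (edistSphere G c (2 * i + 2)).encard
      ≤ (d 0 * ∏ j ∈ range (2 * i + 1), (d (j + 1) - 1) : ℕ) :=
        encard_edistSphere_succ_le_mul_prod hd (2 * i + 1)
    _ = (r * (s - 1) * ((r - 1) * (s - 1)) ^ i : ℕ) := by
      rw [hprod, mul_assoc, show d 0 = r from if_pos Even.zero]

theorem encard_inter_ball_le (hG : G.IsBipartiteWith A B)
    (hA : ∀ v ∈ A, G.degree v ≤ r) (hB : ∀ v ∈ B, G.degree v ≤ s) (hc : c ∈ A) (m : ℕ) :
    (A ∩ G.ball c (2 * m + 2 : ℕ)).encard ≤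
      (1 + r * (s - 1) * ∑ i ∈ range m, ((r - 1) * (s - 1)) ^ i : ℕ) :=
  calc (A ∩ G.ball c (2 * m + 2 : ℕ)).encard
      ≤ (⋃ i ∈ range (m + 1), edistSphere G c (2 * i)).encard :=
        Set.encard_le_encard (inter_ball_subset_biUnion_edistSphere hG hc m)
    _ ≤ ∑ i ∈ range (m + 1), (edistSphere G c (2 * i)).encard := set_encard_biUnion_le _ _
    _ = 1 + ∑ i ∈ range m, (edistSphere G c (2 * i + 2)).encard := by
        rw [sum_range_succ', mul_zero, edistSphere_zero, Set.encard_singleton, add_comm]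
        simp only [Nat.mul_add_one]
    _ ≤ 1 + ∑ i ∈ range m, ((r * (s - 1) * ((r - 1) * (s - 1)) ^ i : ℕ) : ℕ∞) := by
        gcongr with i
        exact encard_edistSphere_two_mul_add_two_le hG hA hB hc i
    _ = (1 + r * (s - 1) * ∑ i ∈ range m, ((r - 1) * (s - 1)) ^ i : ℕ) := by
        rw [mul_sum, Nat.cast_add, Nat.cast_sum, Nat.cast_one]

end Bipartite

theorem stmt_0_general {V : Type*} {G : SimpleGraph V} [G.LocallyFinite] {A B : Set V}
    {r s m : ℕ} (hG : G.IsBipartiteWith A B)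
    (hA : ∀ v ∈ A, G.degree v ≤ r) (hB : ∀ v ∈ B, G.degree v ≤ s)
    (hdiam : ∀ u ∈ A, ∀ v ∈ A, G.edist u v ≤ (2 * m + 1 : ℕ)) :
    A.encard ≤ (1 + r * (s - 1) * ∑ i ∈ range m, ((r - 1) * (s - 1)) ^ i : ℕ) := by
  rcases A.eq_empty_or_nonempty with rfl | ⟨c, hc⟩
  · simp
  · have hball : A ⊆ G.ball c (2 * m + 2 : ℕ) := fun u hu ↦
      (hdiam u hu c hc).trans_lt (Nat.cast_lt.mpr (Nat.lt_succ_self _))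
    rw [← Set.inter_eq_left.mpr hball]
    exact encard_inter_ball_le hG hA hB hc m

/-- If a connected bipartite graph with parts `V1` (degree `r ≥ 2`) and `V2` (degree `s ≥ 2`),
with `(r-1)(s-1) ≥ 2`, has diameter at most `2m+1`, then
`|V1| ≤ 1 + r(s-1)·∑_{i=0}^{m-1} ((r-1)(s-1))^i`. -/
theorem stmt_0 {V : Type*} [Fintype V] (G : SimpleGraph V) [DecidableRel G.Adj]
    (V1 V2 : Finset V) (r s m : ℕ)
    (hm : 1 ≤ m) (hr : 2 ≤ r) (hs : 2 ≤ s) (hrs : 2 ≤ (r - 1) * (s - 1))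
    (hpart : ∀ v : V, v ∈ V1 ↔ v ∉ V2)
    (hbip : ∀ u v : V, G.Adj u v → (u ∈ V1 ∧ v ∈ V2) ∨ (u ∈ V2 ∧ v ∈ V1))
    (hconn : G.Connected)
    (hdeg1 : ∀ v ∈ V1, G.degree v = r)
    (hdeg2 : ∀ v ∈ V2, G.degree v = s)
    (hdiam : ∀ u v : V, G.dist u v ≤ 2 * m + 1) :
    V1.card ≤ 1 + r * (s - 1) * ∑ i ∈ Finset.range m, ((r - 1) * (s - 1)) ^ i := by
  have hG : G.IsBipartiteWith V1 V2 :=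
    ⟨disjoint_coe.mpr (disjoint_left.mpr fun v ↦ (hpart v).mp), hbip⟩
  have hedist (u v : V) : G.edist u v ≤ (2 * m + 1 : ℕ) := by
    simpa only [← (hconn u v).coe_dist_eq_edist, Nat.cast_le] using hdiam u v
  simpa only [Set.encard_coe_eq_coe_finsetCard, Nat.cast_le] using
    stmt_0_general hG (fun v hv ↦ (hdeg1 v hv).le) (fun v hv ↦ (hdeg2 v hv).le)
      fun u _ v _ ↦ hedist u v
end

section
/- Let G be an [r,s;3]-bigraph with parts V₁ and V₂ (degrees r and s respectively), with r ≥ s ≥ 2, such that |V₂| = s(r−1). Then either r = s or r = s². -/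
/-!
Let `N` be the `V₂ × V₁` biadjacency matrix. Distinct vertices of `V₂` at distance at most `3` have
a common neighbor, so the off-diagonal entries of `N Nᵀ - J` are nonnegative, where `J` is the
all-ones matrix. Its diagonal entries are `s - 1` and its row sums are `s r - |V₂| = s`, so for
`s > 2` it is strictly diagonally dominant. Since the columns of `Nᵀ` all sum to `s`, also
`N Nᵀ - J = (N - s⁻¹ J) Nᵀ` factors through `ℝ^V₁`. Hence `|V₂| ≤ |V₁|`, and counting edges gives
`r ≤ s`. For `s = 2`, counting edges gives `r ∣ s² (r - 1)`, so `r ∣ 4`.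
-/

open Finset Matrix

section Matrix

variable {m n R : Type*} [Fintype m] [Fintype n]

lemma card_le_card_of_det_mul_ne_zero [DecidableEq m] [CommRing R] [IsDomain R]
    {A : Matrix m n R} {B : Matrix n m R} (h : (A * B).det ≠ 0) :
    Fintype.card m ≤ Fintype.card n :=
  calc Fintype.card m = (A * B).rank := (rank_of_det_ne_zero h).symm
    _ ≤ A.rank := rank_mul_le_left A B
    _ ≤ Fintype.card n := A.rank_le_card_width

lemma card_le_card_of_det_mul_sub_ones_ne_zero [DecidableEq m] [Field R]
    {A : Matrix m n R} {B : Matrix n m R} {c : R} (hc : c ≠ 0) (hB : ∀ j, ∑ i, B i j = c)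
    (h : (A * B - of fun _ _ => 1).det ≠ 0) :
    Fintype.card m ≤ Fintype.card n := by
  have hfactor : (A - of fun _ _ => c⁻¹) * B = A * B - of fun _ _ => 1 := by
    rw [Matrix.sub_mul, sub_right_inj]
    ext i j
    simp only [mul_apply, of_apply, ← mul_sum, hB, inv_mul_cancel₀ hc]
  exact card_le_card_of_det_mul_ne_zero (hfactor ▸ h)

lemma sum_row_mul {l : Type*} [NonUnitalSemiring R] {A : Matrix l m R} {B : Matrix m n R} {a b : R}
    (hA : ∀ i, ∑ j, A i j = a) (hB : ∀ j, ∑ k, B j k = b) (i : l) :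
    ∑ k, (A * B) i k = a * b := by
  simp only [mul_apply]
  rw [sum_comm]
  simp only [← mul_sum, hB, ← sum_mul, hA]

lemma det_ne_zero_of_sum_row_lt_two_mul_diag [DecidableEq m] {C : Matrix m m ℝ}
    (hoff : ∀ i j, i ≠ j → 0 ≤ C i j) (hrow : ∀ i, ∑ j, C i j < 2 * C i i) : C.det ≠ 0 := by
  refine det_ne_zero_of_sum_row_lt_diag fun i => ?_
  have hnorm : ∑ j ∈ univ.erase i, ‖C i j‖ = ∑ j ∈ univ.erase i, C i j :=
    sum_congr rfl fun j hj => Real.norm_of_nonneg (hoff i j (ne_of_mem_erase hj).symm)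
  have hsplit := add_sum_erase univ (C i) (mem_univ i)
  have hlt := hrow i
  calc ∑ j ∈ univ.erase i, ‖C i j‖ < C i i := by linarith
    _ ≤ ‖C i i‖ := Real.le_norm_self _

end Matrix

section Biadjacency

variable {V : Type*} (R : Type*) (G : SimpleGraph V) [DecidableRel G.Adj]

/-- The biadjacency matrix of `G` between two finite sets of vertices: the block of the adjacency
matrix with rows indexed by `A` and columns indexed by `B`. -/
def biadjMatrix [Zero R] [One R] (A B : Finset V) : Matrix A B R :=
  (G.adjMatrix R).submatrix (↑) (↑)

lemma transpose_biadjMatrix [Zero R] [One R] (A B : Finset V) :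
    (biadjMatrix R G A B)ᵀ = biadjMatrix R G B A := by
  rw [biadjMatrix, transpose_submatrix, G.transpose_adjMatrix, biadjMatrix]

lemma sum_biadjMatrix_row_eq_card [NonAssocSemiring R] (A B : Finset V) (v : A) :
    ∑ u, biadjMatrix R G A B v u = #{u ∈ B | G.Adj v u} := by
  simp only [biadjMatrix, submatrix_apply, SimpleGraph.adjMatrix_apply]
  rw [sum_coe_sort B fun u => if G.Adj v u then (1 : R) else 0, sum_boole]

lemma biadjMatrix_mul_transpose_apply [NonAssocSemiring R] (A B : Finset V) (v w : A) :
    (biadjMatrix R G A B * (biadjMatrix R G A B)ᵀ) v w = #{u ∈ B | G.Adj v u ∧ G.Adj w u} := by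
  simp only [mul_apply, transpose_apply, biadjMatrix, submatrix_apply,
    SimpleGraph.adjMatrix_apply, ite_zero_mul_ite_zero, mul_one]
  rw [sum_coe_sort B fun u => if G.Adj v u ∧ G.Adj w u then (1 : R) else 0, sum_boole]

end Biadjacency

section Distance

variable {V : Type*} {G : SimpleGraph V} {V₁ V₂ : Set V}

lemma commonNeighbors_nonempty_of_edist_le_three (hG : G.IsBipartiteWith V₁ V₂) {v w : V}
    (hv : v ∈ V₂) (hw : w ∈ V₂) (hne : v ≠ w) (hdist : G.edist v w ≤ 3) :
    (G.commonNeighbors v w).Nonempty := by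
  have mem_left {a b : V} (ha : a ∈ V₂) (hab : G.Adj a b) : b ∈ V₁ := hG.symm.mem_of_mem_adj ha hab
  have mem_right {a b : V} (ha : a ∈ V₁) (hab : G.Adj a b) : b ∈ V₂ := hG.mem_of_mem_adj ha hab
  have hw₁ : w ∉ V₁ := hG.disjoint.notMem_of_mem_right hw
  obtain ⟨p, hp⟩ := SimpleGraph.exists_walk_of_edist_ne_top
    (ne_top_of_le_ne_top (ENat.natCast_ne_top 3) hdist)
  have hlen : p.length ≤ 3 := by rw [← hp] at hdist; exact_mod_cast hdist
  match p, hlen with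
  | .nil, _ => exact absurd rfl hne
  | .cons h .nil, _ => exact absurd (mem_left hv h) hw₁
  | .cons h (.cons h' .nil), _ => exact ⟨_, h, h'.symm⟩
  | .cons h (.cons h' (.cons h'' .nil)), _ =>
    exact absurd (mem_left (mem_right (mem_left hv h) h') h'') hw₁
  | .cons _ (.cons _ (.cons _ (.cons _ _))), hlen =>
    simp only [SimpleGraph.Walk.length_cons] at hlen
    omega

lemma pairwise_commonNeighbors_nonempty_of_ediam_le_three (hG : G.IsBipartiteWith V₁ V₂)
    (hdiam : G.ediam ≤ 3) : V₂.Pairwise fun v w => (G.commonNeighbors v w).Nonempty :=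
  fun _ hv _ hw hne => commonNeighbors_nonempty_of_edist_le_three hG hv hw hne
    (SimpleGraph.edist_le_ediam.trans hdiam)

end Distance

/-- `G` is bipartite with parts `V₁` and `V₂` and biregular: every vertex of `V₁` has degree `r` and
every vertex of `V₂` has degree `s`. The parts need not cover `V`, but every edge joins them, so
the remaining vertices are isolated. -/
structure IsBiregularWith {V : Type*} (G : SimpleGraph V) [G.LocallyFinite] (V₁ V₂ : Finset V)
    (r s : ℕ) : Prop where
  isBipartiteWith : G.IsBipartiteWith (V₁ : Set V) (V₂ : Set V)
  degree_left : ∀ v ∈ V₁, G.degree v = r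
  degree_right : ∀ v ∈ V₂, G.degree v = s

namespace IsBiregularWith

variable {V : Type*} {G : SimpleGraph V} [G.LocallyFinite] {V₁ V₂ : Finset V} {r s : ℕ}

lemma symm (h : IsBiregularWith G V₁ V₂ r s) : IsBiregularWith G V₂ V₁ s r :=
  ⟨h.isBipartiteWith.symm, h.degree_right, h.degree_left⟩

lemma card_mul_eq_card_mul (h : IsBiregularWith G V₁ V₂ r s) : #V₁ * r = #V₂ * s := by
  simpa only [sum_congr rfl h.degree_left, sum_congr rfl h.degree_right, sum_const, smul_eq_mul]
    using SimpleGraph.isBipartiteWith_sum_degrees_eq h.isBipartiteWith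

lemma card_filter_adj [DecidableRel G.Adj] (h : IsBiregularWith G V₁ V₂ r s) {v : V}
    (hv : v ∈ V₁) : #{u ∈ V₂ | G.Adj v u} = r := by
  rw [← SimpleGraph.isBipartiteWith_neighborFinset h.isBipartiteWith hv,
    G.card_neighborFinset_eq_degree, h.degree_left v hv]

lemma sum_biadjMatrix_row [DecidableRel G.Adj] (h : IsBiregularWith G V₁ V₂ r s)
    (R : Type*) [NonAssocSemiring R] (v : V₁) : ∑ u, biadjMatrix R G V₁ V₂ v u = r := by
  rw [sum_biadjMatrix_row_eq_card, h.card_filter_adj v.2]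

lemma one_le_biadjMatrix_mul_transpose_apply [DecidableRel G.Adj]
    (h : IsBiregularWith G V₁ V₂ r s) {v w : V₂} (hvw : (G.commonNeighbors (v : V) w).Nonempty) :
    1 ≤ (biadjMatrix ℝ G V₂ V₁ * (biadjMatrix ℝ G V₂ V₁)ᵀ) v w := by
  obtain ⟨u, hvu, hwu⟩ := hvw
  have hu : u ∈ V₁ := h.isBipartiteWith.symm.mem_of_mem_adj v.2 hvu
  rw [biadjMatrix_mul_transpose_apply, Nat.one_le_cast, one_le_card]
  exact ⟨u, mem_filter.mpr ⟨hu, hvu, hwu⟩⟩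

lemma card_right_le_card_left (h : IsBiregularWith G V₁ V₂ r s)
    (hcommon : (V₂ : Set V).Pairwise fun v w => (G.commonNeighbors v w).Nonempty)
    (hs : s ≠ 0) (hlt : s * r + 2 < #V₂ + 2 * s) : #V₂ ≤ #V₁ := by
  classical
  set N := biadjMatrix ℝ G V₂ V₁
  have hsumN : ∀ v, ∑ u, N v u = s := h.symm.sum_biadjMatrix_row ℝ
  have hsumNT : ∀ u, ∑ v, Nᵀ u v = r := by
    rw [transpose_biadjMatrix]
    exact h.sum_biadjMatrix_row ℝ
  have hdiag (v : V₂) : (N * Nᵀ) v v = s := by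
    simp only [N, biadjMatrix_mul_transpose_apply, and_self, h.symm.card_filter_adj v.2]
  have hdet : (N * Nᵀ - of fun _ _ => 1).det ≠ 0 := by
    refine det_ne_zero_of_sum_row_lt_two_mul_diag (fun v w hvw => ?_) fun v => ?_
    · exact sub_nonneg.mpr <| h.one_le_biadjMatrix_mul_transpose_apply <|
        hcommon v.2 w.2 (Subtype.coe_ne_coe.mpr hvw)
    · have hlt' : (s * r + 2 : ℝ) < #V₂ + 2 * s := by exact_mod_cast hlt
      simp only [Matrix.sub_apply, of_apply, sum_sub_distrib, sum_row_mul hsumN hsumNT, hdiag,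
        sum_const, card_univ, Fintype.card_coe, nsmul_one]
      linarith
  simpa only [Fintype.card_coe] using
    card_le_card_of_det_mul_sub_ones_ne_zero (Nat.cast_ne_zero.mpr hs) hsumN hdet

lemma left_degree_le_right_degree (h : IsBiregularWith G V₁ V₂ r s) (hV₂ : 0 < #V₂)
    (hle : #V₂ ≤ #V₁) : r ≤ s := by
  refine Nat.le_of_mul_le_mul_left ?_ hV₂
  calc #V₂ * r ≤ #V₁ * r := Nat.mul_le_mul_right r hle
    _ = #V₂ * s := h.card_mul_eq_card_mul

lemma left_degree_dvd_sq_right_degree (h : IsBiregularWith G V₁ V₂ r s) (hr : 0 < r)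
    (hcard : #V₂ = s * (r - 1)) : r ∣ s ^ 2 := by
  have hcoprime : Nat.Coprime r (r - 1) := by
    rw [Nat.coprime_self_sub_right hr]
    exact Nat.coprime_one_right r
  refine hcoprime.dvd_of_dvd_mul_right ⟨#V₁, ?_⟩
  calc s ^ 2 * (r - 1) = #V₂ * s := by rw [hcard]; ring
    _ = r * #V₁ := by rw [← h.card_mul_eq_card_mul, mul_comm]

end IsBiregularWith

theorem stmt_1_general {V : Type*} {G : SimpleGraph V} [G.LocallyFinite] {V₁ V₂ : Finset V}
    {r s : ℕ} (h : IsBiregularWith G V₁ V₂ r s)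
    (hcommon : (V₂ : Set V).Pairwise fun v w => (G.commonNeighbors v w).Nonempty)
    (hrs : s ≤ r) (hs : 2 ≤ s) (hcard : #V₂ = s * (r - 1)) :
    r = s ∨ s = 2 ∧ r = 4 := by
  rcases hs.eq_or_lt with rfl | hs
  · have hdvd : r ∣ 4 := h.left_degree_dvd_sq_right_degree (by omega) hcard
    have hr : r ≤ 4 := Nat.le_of_dvd (by norm_num) hdvd
    interval_cases r <;> omega
  · left
    have hpos : 0 < #V₂ := hcard ▸ Nat.mul_pos (by omega) (by omega)
    have hcard' : #V₂ + s = s * r := by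
      rw [hcard, ← Nat.mul_succ, Nat.succ_eq_add_one, Nat.sub_add_cancel (by omega)]
    have hle : #V₂ ≤ #V₁ := h.card_right_le_card_left hcommon (by omega) (by omega)
    exact le_antisymm (h.left_degree_le_right_degree hpos hle) hrs

/-- If `G` is an `[r,s;3]`-bigraph (connected bipartite biregular with degrees `r ≥ s ≥ 2`
and diameter 3) with `|V2| = s(r-1)`, then either `r = s` or `r = s²`. -/
theorem stmt_1 {V : Type*} [Fintype V] (G : SimpleGraph V) [DecidableRel G.Adj]
    (V1 V2 : Finset V) (r s : ℕ) (hrs : s ≤ r) (hs : 2 ≤ s)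
    (hpart : ∀ v : V, v ∈ V1 ↔ v ∉ V2)
    (hbip : ∀ u v : V, G.Adj u v → (u ∈ V1 ∧ v ∈ V2) ∨ (u ∈ V2 ∧ v ∈ V1))
    (hconn : G.Connected)
    (hdeg1 : ∀ v ∈ V1, G.degree v = r)
    (hdeg2 : ∀ v ∈ V2, G.degree v = s)
    (hdiam : G.diam = 3)
    (hcard : V2.card = s * (r - 1)) :
    r = s ∨ r = s ^ 2 := by
  have hG : G.IsBipartiteWith (V1 : Set V) (V2 : Set V) :=
    ⟨Set.disjoint_left.mpr fun v => (hpart v).mp, fun u v => hbip u v⟩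
  have hediam : G.ediam ≤ 3 := by
    rw [← ENat.natCast_toNat (SimpleGraph.ediam_ne_top_of_diam_ne_zero (by omega : G.diam ≠ 0))]
    exact_mod_cast hdiam.le
  exact (stmt_1_general ⟨hG, hdeg1, hdeg2⟩
    (pairwise_commonNeighbors_nonempty_of_ediam_le_three hG hediam) hrs hs hcard).imp_right
    fun ⟨hs2, hr4⟩ => by rw [hs2, hr4]; norm_num
end

section
/- Let G be an [r,s;3]-bigraph with parts V₁ and V₂ (degrees r and s respectively), with r ≥ s ≥ 2, such that |V₂| = s(r−1). Then for every vertex u ∈ V₂ there exists a unique vertex u' ∈ V₂ with u' ≠ u such that |N(u) ∩ N(u')| = 2 (the repeat of u); moreover, every other vertex w ∈ V₂ with w ≠ u and w ≠ u' satisfies |N(u) ∩ N(w)| = 1. -/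
/-!
Fix `u ∈ V₂`. The graph is bipartite, so a vertex `w ≠ u` of `V₂` at distance at most `3` from `u`
is at distance exactly `2`, that is `|N(u) ∩ N(w)| ≥ 1`. Counting paths of length two from `u`
gives `∑ w ∈ V₂ \ {u}, |N(u) ∩ N(w)| = s * r - s = s * (r - 1) = |V₂|`, which is one more than
the number of terms. So exactly one term is `2` and all the others are `1`.
-/

theorem exists_eq_add_one_of_sum_eq_sum_add_one {ι : Type*} {S : Finset ι} {f g : ι → ℕ}
    (hle : ∀ i ∈ S, g i ≤ f i) (hsum : ∑ i ∈ S, f i = ∑ i ∈ S, g i + 1) :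
    ∃ a ∈ S, f a = g a + 1 ∧ ∀ i ∈ S, i ≠ a → f i = g i := by
  classical
  obtain ⟨a, ha, hlt⟩ : ∃ a ∈ S, g a < f a := Finset.exists_lt_of_sum_lt (by omega)
  have hle' : ∀ i ∈ S.erase a, g i ≤ f i := fun i hi => hle i (Finset.mem_of_mem_erase hi)
  have hsum_erase : ∑ i ∈ S.erase a, g i ≤ ∑ i ∈ S.erase a, f i := Finset.sum_le_sum hle'
  rw [← Finset.add_sum_erase S f ha, ← Finset.add_sum_erase S g ha] at hsum
  have heq : ∀ i ∈ S.erase a, g i = f i := (Finset.sum_eq_sum_iff_of_le hle').1 (by omega)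
  exact ⟨a, ha, by omega, fun i hi hia => (heq i (Finset.mem_erase.2 ⟨hia, hi⟩)).symm⟩

section Graph

variable {V : Type*} {G : SimpleGraph V} {s t : Set V} {u v : V}

theorem even_length_iff_of_isBipartiteWith (h : G.IsBipartiteWith s t) (p : G.Walk u v) :
    Even p.length ↔ (u ∈ s ↔ v ∈ s) := by
  classical
  let c : G.Coloring Bool := .mk (fun x => decide (x ∈ s)) fun {x y} hxy => by
    rcases h.mem_of_adj hxy with ⟨hx, hy⟩ | ⟨hx, hy⟩
    · simp [hx, Set.disjoint_right.1 h.disjoint hy]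
    · simp [hy, Set.disjoint_right.1 h.disjoint hx]
  have hc (x : V) : c x = decide (x ∈ s) := rfl
  simpa [hc] using c.even_length_iff_congr p

theorem commonNeighbors_nonempty_of_edist_le_three_s2 (h : G.IsBipartiteWith s t)
    (hu : u ∈ s) (hv : v ∈ s) (hne : u ≠ v) (hdist : G.edist u v ≤ 3) :
    (G.commonNeighbors u v).Nonempty := by
  have heven (p : G.Walk u v) : Even p.length :=
    (even_length_iff_of_isBipartiteWith h p).2 (iff_of_true hu hv)
  have hnadj : ¬G.Adj u v := fun hadj => by simpa using heven hadj.toWalk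
  by_contra hempty
  have hdist_eq : G.edist u v = (3 : ℕ) :=
    le_antisymm hdist <| Order.add_one_le_of_lt <|
      SimpleGraph.two_lt_edist_iff.2 ⟨hne, hnadj, Set.not_nonempty_iff_eq_empty.1 hempty⟩
  obtain ⟨p, hp⟩ := SimpleGraph.exists_walk_of_edist_eq_coe hdist_eq
  exact absurd (hp ▸ heven p) (by decide)

variable [DecidableEq V] [G.LocallyFinite]

theorem sum_card_neighborFinset_inter (S T : Finset V) :
    ∑ v ∈ S, (T ∩ G.neighborFinset v).card = ∑ x ∈ T, (S ∩ G.neighborFinset x).card := by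
  classical
  have hfilter (A : Finset V) (v : V) : A ∩ G.neighborFinset v = {x ∈ A | G.Adj v x} := by
    ext x
    simp
  simpa only [hfilter, G.adj_comm, Finset.bipartiteAbove, Finset.bipartiteBelow] using
    Finset.sum_card_bipartiteAbove_eq_sum_card_bipartiteBelow (s := S) (t := T) G.Adj

theorem sum_card_neighborFinset_inter_eq_sum_degree {S T : Finset V}
    (h : G.IsBipartiteWith (S : Set V) T) (hu : u ∈ T) :
    ∑ w ∈ T, (G.neighborFinset u ∩ G.neighborFinset w).card =
      ∑ x ∈ G.neighborFinset u, G.degree x := by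
  rw [sum_card_neighborFinset_inter]
  refine Finset.sum_congr rfl fun x hx => ?_
  have hxS : x ∈ S := SimpleGraph.isBipartiteWith_neighborFinset_subset' h hu hx
  rw [Finset.inter_eq_right.2 (SimpleGraph.isBipartiteWith_neighborFinset_subset h hxS),
    G.card_neighborFinset_eq_degree]

theorem stmt_2_general {V₁ V₂ : Finset V} {r : ℕ}
    (hbip : G.IsBipartiteWith (V₁ : Set V) V₂) (hu : u ∈ V₂)
    (hdeg : ∀ x ∈ G.neighborFinset u, G.degree x = r) (hdist : ∀ w ∈ V₂, G.edist u w ≤ 3)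
    (hcard : V₂.card = G.degree u * (r - 1)) :
    ∃ u' ∈ V₂, u' ≠ u ∧ (G.neighborFinset u ∩ G.neighborFinset u').card = 2 ∧
      ∀ w ∈ V₂, w ≠ u → w ≠ u' → (G.neighborFinset u ∩ G.neighborFinset w).card = 1 := by
  have hpaths : ∑ w ∈ V₂, (G.neighborFinset u ∩ G.neighborFinset w).card = G.degree u * r := by
    rw [sum_card_neighborFinset_inter_eq_sum_degree hbip hu, Finset.sum_const_nat hdeg,
      G.card_neighborFinset_eq_degree]
  have hpos : ∀ w ∈ V₂.erase u, 1 ≤ (G.neighborFinset u ∩ G.neighborFinset w).card := by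
    intro w hw
    obtain ⟨hwu, hw⟩ := Finset.mem_erase.1 hw
    obtain ⟨x, hux, hwx⟩ :=
      commonNeighbors_nonempty_of_edist_le_three_s2 hbip.symm hu hw hwu.symm (hdist w hw)
    exact Finset.card_pos.2 ⟨x, by simpa using ⟨hux, hwx⟩⟩
  have hr : r = r - 1 + 1 := by
    have : r - 1 ≠ 0 := right_ne_zero_of_mul (hcard ▸ Finset.card_ne_zero_of_mem hu)
    omega
  have hsum : ∑ w ∈ V₂.erase u, (G.neighborFinset u ∩ G.neighborFinset w).card =
      ∑ _w ∈ V₂.erase u, 1 + 1 := by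
    rw [← Finset.add_sum_erase _ _ hu, Finset.inter_self, G.card_neighborFinset_eq_degree, hr,
      mul_add_one, ← hcard] at hpaths
    rw [← Finset.card_eq_sum_ones, Finset.card_erase_add_one hu]
    omega
  obtain ⟨u', hu', htwo, hone⟩ := exists_eq_add_one_of_sum_eq_sum_add_one hpos hsum
  obtain ⟨hne, hu'⟩ := Finset.mem_erase.1 hu'
  exact ⟨u', hu', hne, htwo, fun w hw hwu => hone w (Finset.mem_erase.2 ⟨hwu, hw⟩)⟩

end Graph

/-- If `G` is an `[r,s;3]`-bigraph (connected bipartite biregular with degrees `r ≥ s ≥ 2`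
and diameter 3) with `|V2| = s(r-1)`, then every `u ∈ V2` has a unique repeat `u' ∈ V2`,
`u' ≠ u`, with `|N(u) ∩ N(u')| = 2`, and every other `w ∈ V2` has `|N(u) ∩ N(w)| = 1`. -/
theorem stmt_2 {V : Type*} [Fintype V] [DecidableEq V] (G : SimpleGraph V)
    [DecidableRel G.Adj]
    (V1 V2 : Finset V) (r s : ℕ) (hrs : s ≤ r) (hs : 2 ≤ s)
    (hpart : ∀ v : V, v ∈ V1 ↔ v ∉ V2)
    (hbip : ∀ u v : V, G.Adj u v → (u ∈ V1 ∧ v ∈ V2) ∨ (u ∈ V2 ∧ v ∈ V1))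
    (hconn : G.Connected)
    (hdeg1 : ∀ v ∈ V1, G.degree v = r)
    (hdeg2 : ∀ v ∈ V2, G.degree v = s)
    (hdiam : G.diam = 3)
    (hcard : V2.card = s * (r - 1)) :
    ∀ u ∈ V2, ∃ u' ∈ V2, u' ≠ u ∧
      (G.neighborFinset u ∩ G.neighborFinset u').card = 2 ∧
      ∀ w ∈ V2, w ≠ u → w ≠ u' →
        (G.neighborFinset u ∩ G.neighborFinset w).card = 1 := by
  have hbip' : G.IsBipartiteWith (V1 : Set V) V2 :=
    ⟨Finset.disjoint_coe.2 (Finset.disjoint_left.2 fun v => (hpart v).1), fun u v => hbip u v⟩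
  have hediam : G.ediam = (3 : ℕ) := (ENat.toNat_eq_iff three_ne_zero).1 hdiam
  exact fun u hu => stmt_2_general hbip' hu
    (fun x hx => hdeg1 x (SimpleGraph.isBipartiteWith_neighborFinset_subset' hbip' hu hx))
    (fun _ _ => SimpleGraph.edist_le_ediam.trans_eq hediam) (by rw [hdeg2 u hu, hcard])
end

section
/- Let s ≥ 3 and let ρ be an integer with s−1 ≤ ρ ≤ s²−s−3. Let G be a bipartite graph with parts V₁ and V₂ such that |V₁| = s²−1, |V₂| = ρ(s²−1), every vertex of V₁ has degree ρs, every vertex of V₂ has degree s, and G has diameter 3. Then there exist two distinct vertices v, v' ∈ V₁ such that |N(v) ∩ N(v')| ≥ ρ−s+3. -/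
/-!
Fix `v ∈ V₁`. Counting the pairs `(u, w)` with `w ∈ N(v) ∩ N(u)` by `u` and by `w` shows that the
numbers `|N(v) ∩ N(u)|`, over the `s² - 2` vertices `u ≠ v` of `V₁`, add up to `ρs(s - 1)`. Since
`ρs(s - 1) - (s² - 2)(ρ - s + 2) = (s - 2)(s² - 2 - ρ) > 0`, one of them exceeds `ρ - s + 2`.
-/

open Finset

section CommonNeighbors

variable {V : Type*} [DecidableEq V] (G : SimpleGraph V) [G.LocallyFinite]

theorem sum_card_inter_neighborFinset_comm (S T : Finset V) :
    ∑ u ∈ S, #(T ∩ G.neighborFinset u) = ∑ w ∈ T, #(S ∩ G.neighborFinset w) := by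
  classical
  have filter_adj (A : Finset V) (x : V) : A ∩ G.neighborFinset x = {y ∈ A | G.Adj x y} := by
    ext y
    simp
  simp only [filter_adj]
  simpa only [bipartiteAbove, bipartiteBelow, G.adj_comm] using
    sum_card_bipartiteAbove_eq_sum_card_bipartiteBelow (s := S) (t := T) G.Adj

variable {G} {V₁ : Finset V} {V₂ : Set V} {v : V}

theorem sum_card_inter_neighborFinset_eq_sum_degree (hG : G.IsBipartiteWith V₁ V₂) (hv : v ∈ V₁) :
    ∑ u ∈ V₁, #(G.neighborFinset v ∩ G.neighborFinset u) =
      ∑ w ∈ G.neighborFinset v, G.degree w := by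
  rw [sum_card_inter_neighborFinset_comm]
  refine sum_congr rfl fun w hw => ?_
  have hw₂ : w ∈ V₂ := hG.mem_of_mem_adj hv ((G.mem_neighborFinset v w).mp hw)
  have hsub : G.neighborFinset w ⊆ V₁ := fun u hu =>
    hG.symm.mem_of_mem_adj hw₂ ((G.mem_neighborFinset w u).mp hu)
  rw [inter_eq_right.mpr hsub, G.card_neighborFinset_eq_degree]

theorem exists_sum_degree_le_degree_add_mul_card_inter (hG : G.IsBipartiteWith V₁ V₂) (hv : v ∈ V₁)
    (hV₁ : V₁.Nontrivial) :
    ∃ u ∈ V₁, v ≠ u ∧ ∑ w ∈ G.neighborFinset v, G.degree w ≤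
      G.degree v + (#V₁ - 1) * #(G.neighborFinset v ∩ G.neighborFinset u) := by
  obtain ⟨u, hu, hmax⟩ := (V₁.erase v).exists_max_image
    (fun u => #(G.neighborFinset v ∩ G.neighborFinset u)) hV₁.erase_nonempty
  refine ⟨u, mem_of_mem_erase hu, (ne_of_mem_erase hu).symm, ?_⟩
  rw [← sum_card_inter_neighborFinset_eq_sum_degree hG hv, ← add_sum_erase _ _ hv, inter_self,
    G.card_neighborFinset_eq_degree, ← card_erase_of_mem hv, ← smul_eq_mul]
  gcongr
  exact sum_le_card_nsmul _ _ _ hmax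

end CommonNeighbors

theorem add_three_le_add_of_mul_mul_le {s ρ c : ℕ} (hs : 3 ≤ s) (hρ : ρ + 2 < s ^ 2)
    (h : ρ * s * s ≤ ρ * s + (s ^ 2 - 2) * c) : ρ + 3 ≤ c + s := by
  by_contra! hc
  zify [show 2 ≤ s ^ 2 by omega] at hs hρ h hc
  have hgap : (0 : ℤ) < (s - 2) * (s ^ 2 - 2 - ρ) := mul_pos (by linarith) (by linarith)
  have hupper : ((s : ℤ) ^ 2 - 2) * c ≤ (s ^ 2 - 2) * (ρ - s + 2) :=
    mul_le_mul_of_nonneg_left (by linarith) (by linarith)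
  linarith

theorem stmt_6_general {V : Type*} [DecidableEq V] {G : SimpleGraph V} [G.LocallyFinite]
    {V₁ : Finset V} {V₂ : Set V} {s ρ : ℕ} (hs : 3 ≤ s) (hρ : ρ + 2 < s ^ 2)
    (hG : G.IsBipartiteWith V₁ V₂) (hcard : #V₁ = s ^ 2 - 1) (hdeg₂ : ∀ w ∈ V₂, G.degree w = s)
    {v : V} (hv : v ∈ V₁) (hdeg : G.degree v = ρ * s) :
    ∃ v' ∈ V₁, v ≠ v' ∧ ρ + 3 ≤ #(G.neighborFinset v ∩ G.neighborFinset v') + s := by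
  have hV₁ : V₁.Nontrivial := one_lt_card_iff_nontrivial.mp (by omega)
  obtain ⟨v', hv', hne, hle⟩ := exists_sum_degree_le_degree_add_mul_card_inter hG hv hV₁
  have hsum : ∑ w ∈ G.neighborFinset v, G.degree w = ρ * s * s := by
    rw [sum_congr rfl fun w hw => hdeg₂ w (hG.mem_of_mem_adj hv ((G.mem_neighborFinset v w).mp hw)),
      sum_const, G.card_neighborFinset_eq_degree, hdeg, smul_eq_mul]
  rw [hsum, hdeg, hcard, Nat.sub_sub] at hle
  exact ⟨v', hv', hne, add_three_le_add_of_mul_mul_le hs hρ hle⟩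

/-- If `s ≥ 3`, `s-1 ≤ ρ ≤ s²-s-3`, and `G` is a bipartite graph with parts `V1`
(size `s²-1`, degrees `ρs`) and `V2` (size `ρ(s²-1)`, degrees `s`) of diameter 3, then some
two distinct vertices of `V1` have at least `ρ-s+3` common neighbours. -/
theorem stmt_6 {V : Type*} [Fintype V] [DecidableEq V] (G : SimpleGraph V)
    [DecidableRel G.Adj]
    (V1 V2 : Finset V) (s ρ : ℕ) (hs : 3 ≤ s) (hρ1 : s - 1 ≤ ρ) (hρ2 : ρ ≤ s ^ 2 - s - 3)
    (hpart : ∀ v : V, v ∈ V1 ↔ v ∉ V2)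
    (hbip : ∀ u v : V, G.Adj u v → (u ∈ V1 ∧ v ∈ V2) ∨ (u ∈ V2 ∧ v ∈ V1))
    (hcard1 : V1.card = s ^ 2 - 1) (hcard2 : V2.card = ρ * (s ^ 2 - 1))
    (hdeg1 : ∀ v ∈ V1, G.degree v = ρ * s)
    (hdeg2 : ∀ v ∈ V2, G.degree v = s)
    (hdiam : G.diam = 3) :
    ∃ v ∈ V1, ∃ v' ∈ V1, v ≠ v' ∧
      ρ + 3 - s ≤ (G.neighborFinset v ∩ G.neighborFinset v').card := by
  have hsq : 3 * s ≤ s ^ 2 := by nlinarith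
  have hG : G.IsBipartiteWith V1 V2 :=
    ⟨disjoint_coe.mpr (disjoint_left.mpr fun v => (hpart v).mp), fun u v => hbip u v⟩
  obtain ⟨v, hv⟩ : V1.Nonempty := card_pos.mp (by omega)
  obtain ⟨v', hv', hne, hle⟩ := stmt_6_general hs (by omega) hG hcard1 hdeg2 hv (hdeg1 v hv)
  exact ⟨v, hv, v', hv', hne, by omega⟩
end

section
/- Let q be a prime power, let s = q+1, and let n = s²−s+1 = q²+q+1. Then for every integer m ≥ 1 there exists a bipartite graph with parts V₀ and V₁ of sizes n and m·n respectively (so with (m+1)·n vertices in total), in which every vertex of V₀ has degree m·s, every vertex of V₁ has degree s, and whose diameter is 3. -/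
open scoped Classical

/-!
Take a projective plane of order `q` and replace each line by `m` copies of itself; the graph is
the point-line incidence graph of the result. Any two points share a line and any two lines, copies
of the same line included, share a point. Hence vertices of the same part are at distance at most
two and vertices of different parts at distance at most three, with equality when the point is off
the line. Singer's difference sets describe the planes over finite fields by a cyclic group; only
the axioms of a projective plane matter here, so the plane over `𝔽_q` is used directly.
-/

open Configuration LinearAlgebra.Projectivization

section Homomorphism

variable {V W : Type*} {G : SimpleGraph V} {H : SimpleGraph W}

theorem edist_map_le (f : G →g H) (u v : V) : H.edist (f u) (f v) ≤ G.edist u v :=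
  le_iInf fun p => by simpa only [SimpleGraph.Walk.length_map] using (p.map f).edist_le

theorem ediam_le_of_surjective (f : G →g H) (hf : Function.Surjective f) : H.ediam ≤ G.ediam :=
  SimpleGraph.ediam_le_of_edist_le <| hf.forall₂.mpr fun u v =>
    (edist_map_le f u v).trans SimpleGraph.edist_le_ediam

theorem diam_eq_of_iso (f : G ≃g H) : G.diam = H.diam :=
  congrArg ENat.toNat <| le_antisymm (ediam_le_of_surjective f.symm.toHom f.symm.surjective)
    (ediam_le_of_surjective f.toHom f.surjective)

end Homomorphism

section IncidenceGraph

variable {α β : Type*} {r : α → β → Prop} {a a' : α} {b b' : β}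

/-- The bipartite graph (Levi graph) of a relation `r`, with parts `α` and `β`, in which `a : α`
and `b : β` are adjacent when `r a b`. Lines may be repeated, since distinct elements of `β` may be
related to the same elements of `α`. -/
def incidenceGraph (r : α → β → Prop) : SimpleGraph (α ⊕ β) where
  Adj
    | .inl a, .inr b => r a b
    | .inr b, .inl a => r a b
    | _, _ => False
  symm := ⟨by rintro (_ | _) (_ | _) h <;> exact h⟩
  loopless := ⟨by rintro (_ | _) h <;> exact h⟩

@[simp]
theorem incidenceGraph_adj_inl_inr : (incidenceGraph r).Adj (.inl a) (.inr b) ↔ r a b :=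
  .rfl

@[simp]
theorem incidenceGraph_adj_inr_inl : (incidenceGraph r).Adj (.inr b) (.inl a) ↔ r a b :=
  .rfl

@[simp]
theorem not_incidenceGraph_adj_inl_inl : ¬ (incidenceGraph r).Adj (.inl a) (.inl a') :=
  id

@[simp]
theorem not_incidenceGraph_adj_inr_inr : ¬ (incidenceGraph r).Adj (.inr b) (.inr b') :=
  id

theorem neighborSet_incidenceGraph_inl (a : α) :
    (incidenceGraph r).neighborSet (.inl a) = Sum.inr '' {b | r a b} := by
  ext (_ | _) <;> simp

theorem neighborSet_incidenceGraph_inr (b : β) :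
    (incidenceGraph r).neighborSet (.inr b) = Sum.inl '' {a | r a b} := by
  ext (_ | _) <;> simp

theorem degree_incidenceGraph_inl (a : α) [Fintype ((incidenceGraph r).neighborSet (.inl a))] :
    (incidenceGraph r).degree (.inl a) = Nat.card {b // r a b} := by
  rw [← SimpleGraph.card_neighborSet_eq_degree, ← Nat.card_eq_fintype_card,
    neighborSet_incidenceGraph_inl, Nat.card_image_of_injective Sum.inr_injective]
  rfl

theorem degree_incidenceGraph_inr (b : β) [Fintype ((incidenceGraph r).neighborSet (.inr b))] :
    (incidenceGraph r).degree (.inr b) = Nat.card {a // r a b} := by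
  rw [← SimpleGraph.card_neighborSet_eq_degree, ← Nat.card_eq_fintype_card,
    neighborSet_incidenceGraph_inr, Nat.card_image_of_injective Sum.inl_injective]
  rfl

theorem edist_incidenceGraph_inl_inl_le_two (h : r a b) (h' : r a' b) :
    (incidenceGraph r).edist (.inl a) (.inl a') ≤ 2 :=
  (SimpleGraph.Walk.cons (incidenceGraph_adj_inl_inr.mpr h)
    (.cons (incidenceGraph_adj_inr_inl.mpr h') .nil)).edist_le

theorem edist_incidenceGraph_inr_inr_le_two (h : r a b) (h' : r a b') :
    (incidenceGraph r).edist (.inr b) (.inr b') ≤ 2 :=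
  (SimpleGraph.Walk.cons (incidenceGraph_adj_inr_inl.mpr h)
    (.cons (incidenceGraph_adj_inl_inr.mpr h') .nil)).edist_le

theorem edist_incidenceGraph_inl_inr_le_three (h : r a b') (h' : r a' b') (h'' : r a' b) :
    (incidenceGraph r).edist (.inl a) (.inr b) ≤ 3 :=
  (SimpleGraph.Walk.cons (incidenceGraph_adj_inl_inr.mpr h)
    (.cons (incidenceGraph_adj_inr_inl.mpr h')
      (.cons (incidenceGraph_adj_inl_inr.mpr h'') .nil))).edist_le

theorem three_le_edist_incidenceGraph_inl_inr (h : ¬ r a b) :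
    3 ≤ (incidenceGraph r).edist (.inl a) (.inr b) := by
  have no_common_neighbor :
      (incidenceGraph r).commonNeighbors (.inl a) (.inr b) = ∅ := by
    ext (_ | _) <;> simp [SimpleGraph.mem_commonNeighbors]
  exact Order.add_one_le_of_lt <|
    SimpleGraph.two_lt_edist_iff.mpr ⟨Sum.inl_ne_inr, h, no_common_neighbor⟩

theorem diam_incidenceGraph_eq_three (hleft : ∀ a a', ∃ b, r a b ∧ r a' b)
    (hright : ∀ b b', ∃ a, r a b ∧ r a b') (hr : ∃ a b, ¬ r a b) :
    (incidenceGraph r).diam = 3 := by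
  have inl_inr_le (a : α) (b : β) : (incidenceGraph r).edist (.inl a) (.inr b) ≤ 3 := by
    obtain ⟨a', hb, -⟩ := hright b b
    obtain ⟨b', h, h'⟩ := hleft a a'
    exact edist_incidenceGraph_inl_inr_le_three h h' hb
  have two_le_three : (2 : ℕ∞) ≤ 3 := by norm_num
  have ediam_le : (incidenceGraph r).ediam ≤ 3 := by
    refine SimpleGraph.ediam_le_of_edist_le ?_
    rintro (a | b) (a' | b')
    · obtain ⟨b, h, h'⟩ := hleft a a'
      exact (edist_incidenceGraph_inl_inl_le_two h h').trans two_le_three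
    · exact inl_inr_le a b'
    · exact SimpleGraph.edist_comm.trans_le (inl_inr_le a' b)
    · obtain ⟨a, h, h'⟩ := hright b b'
      exact (edist_incidenceGraph_inr_inr_le_two h h').trans two_le_three
  obtain ⟨a, b, hab⟩ := hr
  have le_ediam : 3 ≤ (incidenceGraph r).ediam :=
    (three_le_edist_incidenceGraph_inl_inr hab).trans SimpleGraph.edist_le_ediam
  exact congrArg ENat.toNat (le_antisymm ediam_le le_ediam)

end IncidenceGraph

section RepeatedLines

variable {P L : Type*} [Membership P L]

theorem exists_line_mem_mem [HasLines P L] [Nontrivial P] (p p' : P) :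
    ∃ l : L, p ∈ l ∧ p' ∈ l := by
  obtain rfl | hne := eq_or_ne p p'
  · obtain ⟨p', hne⟩ := exists_ne p
    have ⟨_, hp⟩ := HasLines.mkLine_ax (L := L) hne
    exact ⟨_, hp, hp⟩
  · exact ⟨_, HasLines.mkLine_ax hne⟩

theorem exists_point_mem_mem [HasPoints P L] [Nontrivial L] (l l' : L) :
    ∃ p : P, p ∈ l ∧ p ∈ l' :=
  have : Nontrivial (Dual L) := ‹Nontrivial L›
  exists_line_mem_mem (P := Dual L) (L := Dual P) l l'

variable (P L) in
theorem nontrivial_points [ProjectivePlane P L] : Nontrivial P := by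
  obtain ⟨p₁, p₂, -, -, l, -, h₁, -, -, h₂, -⟩ := ProjectivePlane.exists_config (P := P) (L := L)
  exact nontrivial_of_ne p₂ p₁ (ne_of_mem_of_not_mem h₂ h₁)

variable (P L) in
theorem nontrivial_lines [ProjectivePlane P L] : Nontrivial L :=
  nontrivial_points (Dual L) (Dual P)

theorem card_repeated_lines (ι : Type*) (p : P) :
    Nat.card {l : L × ι // p ∈ l.1} = lineCount L p * Nat.card ι :=
  (Nat.card_congr (Equiv.prodSubtypeFstEquivSubtypeProd (p := fun l : L => p ∈ l))).trans
    (Nat.card_prod _ _)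

variable (P L) in
theorem diam_incidenceGraph_repeated_lines [ProjectivePlane P L] (ι : Type*) [Nonempty ι] :
    (incidenceGraph fun (p : P) (l : L × ι) => p ∈ l.1).diam = 3 := by
  have := nontrivial_points P L
  have := nontrivial_lines P L
  obtain ⟨i⟩ := ‹Nonempty ι›
  refine diam_incidenceGraph_eq_three (fun p p' => ?_)
    (fun l l' => exists_point_mem_mem l.1 l'.1) ?_
  · obtain ⟨l, h⟩ := exists_line_mem_mem (L := L) p p'
    exact ⟨(l, i), h⟩
  · obtain ⟨p, -, -, -, l, -, h, -⟩ := ProjectivePlane.exists_config (P := P) (L := L)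
    exact ⟨p, (l, i), h⟩

end RepeatedLines

theorem order_projectivization (K : Type*) [Field K] [Finite K] :
    ProjectivePlane.order (ℙ K (Fin 3 → K)) (ℙ K (Fin 3 → K)) = Nat.card K := by
  have := Fintype.ofFinite (ℙ K (Fin 3 → K))
  have card_eq : Nat.card (ℙ K (Fin 3 → K)) = Nat.card K ^ 2 + Nat.card K + 1 := by
    rw [Projectivization.card_of_finrank K (Fin 3 → K) (Module.finrank_fin_fun K)]
    simp only [Finset.sum_range_succ, Finset.sum_range_zero]
    ring
  rw [Nat.card_eq_fintype_card, ProjectivePlane.card_points _ (ℙ K (Fin 3 → K))] at card_eq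
  have strictMono : StrictMono fun n : ℕ => n ^ 2 + n + 1 := fun m n h => by
    dsimp only
    gcongr
  exact strictMono.injective card_eq

theorem exists_projectivePlane_order_eq {q : ℕ} (hq : IsPrimePow q) :
    ∃ (P L : Type) (_ : Finite P) (_ : Finite L) (_ : Membership P L)
      (_ : ProjectivePlane P L), ProjectivePlane.order P L = q := by
  obtain ⟨p, k, hp, hk, rfl⟩ := (isPrimePow_nat_iff q).mp hq
  have := Fact.mk hp
  refine ⟨ℙ (GaloisField p k) (Fin 3 → GaloisField p k),
    ℙ (GaloisField p k) (Fin 3 → GaloisField p k),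
    inferInstance, inferInstance, inferInstance, inferInstance, ?_⟩
  rw [order_projectivization, GaloisField.card p k hk.ne']

theorem stmt_10_general (P L : Type*) [Membership P L] [ProjectivePlane P L] [Finite P] [Finite L]
    {q : ℕ} (hq : ProjectivePlane.order P L = q) (m : ℕ) (hm : 1 ≤ m) :
    ∃ (G : SimpleGraph (Fin ((m + 1) * (q ^ 2 + q + 1))))
      (V0 V1 : Finset (Fin ((m + 1) * (q ^ 2 + q + 1)))),
      (∀ v, v ∈ V0 ↔ v ∉ V1) ∧
      (∀ u v, G.Adj u v → (u ∈ V0 ∧ v ∈ V1) ∨ (u ∈ V1 ∧ v ∈ V0)) ∧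
      Fintype.card (Fin ((m + 1) * (q ^ 2 + q + 1))) = (m + 1) * (q ^ 2 + q + 1) ∧
      V0.card = q ^ 2 + q + 1 ∧
      V1.card = m * (q ^ 2 + q + 1) ∧
      (∀ v ∈ V0, G.degree v = m * (q + 1)) ∧
      (∀ v ∈ V1, G.degree v = q + 1) ∧
      G.diam = 3 := by
  have := Fintype.ofFinite P
  have := Fintype.ofFinite L
  have : Nonempty (Fin m) := ⟨⟨0, hm⟩⟩
  have card_P : Fintype.card P = q ^ 2 + q + 1 := hq ▸ ProjectivePlane.card_points P L
  have card_L : Fintype.card L = q ^ 2 + q + 1 := hq ▸ ProjectivePlane.card_lines P L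
  have card_vertices : Fintype.card (P ⊕ L × Fin m) = (m + 1) * (q ^ 2 + q + 1) := by
    rw [Fintype.card_sum, Fintype.card_prod, Fintype.card_fin, card_P, card_L]
    ring
  let H := incidenceGraph fun (p : P) (l : L × Fin m) => p ∈ l.1
  have degree_point (p : P) : H.degree (.inl p) = m * (q + 1) := by
    rw [degree_incidenceGraph_inl, card_repeated_lines, ProjectivePlane.lineCount_eq, hq,
      Nat.card_fin, mul_comm]
  have degree_line (l : L × Fin m) : H.degree (.inr l) = q + 1 := by
    rw [degree_incidenceGraph_inr, ← pointCount, ProjectivePlane.pointCount_eq, hq]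
  let f := H.overFinIso card_vertices
  refine ⟨H.overFin card_vertices, Finset.univ.image (f ∘ .inl), Finset.univ.image (f ∘ .inr),
    ?_, ?_, Fintype.card_fin _, ?_, ?_, ?_, ?_, ?_⟩
  · simp [f.surjective.forall]
  · simp [f.surjective.forall, f.map_adj_iff, H]
  · rw [Finset.card_image_of_injective _ (f.injective.comp Sum.inl_injective), Finset.card_univ,
      card_P]
  · rw [Finset.card_image_of_injective _ (f.injective.comp Sum.inr_injective), Finset.card_univ,
      Fintype.card_prod, Fintype.card_fin, card_L, mul_comm]
  · exact Finset.forall_mem_image.mpr fun p _ => (f.degree_eq _).trans (degree_point p)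
  · exact Finset.forall_mem_image.mpr fun l _ => (f.degree_eq _).trans (degree_line l)
  · rw [← diam_eq_of_iso f, diam_incidenceGraph_repeated_lines]

/-- For every prime power `q`, with `s = q+1` and `n = q²+q+1 = s²-s+1`, and every `m ≥ 1`,
there is a bipartite graph on `(m+1)·n` vertices with parts `V₀` of size `n` and `V₁` of
size `m·n`, where every vertex of `V₀` has degree `m·s`, every vertex of `V₁` has degree
`s`, and the diameter is 3. -/
theorem stmt_10 (q : ℕ) (hq : IsPrimePow q) (m : ℕ) (hm : 1 ≤ m) :
    ∃ (G : SimpleGraph (Fin ((m + 1) * (q ^ 2 + q + 1))))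
      (V0 V1 : Finset (Fin ((m + 1) * (q ^ 2 + q + 1)))),
      (∀ v, v ∈ V0 ↔ v ∉ V1) ∧
      (∀ u v, G.Adj u v → (u ∈ V0 ∧ v ∈ V1) ∨ (u ∈ V1 ∧ v ∈ V0)) ∧
      Fintype.card (Fin ((m + 1) * (q ^ 2 + q + 1))) = (m + 1) * (q ^ 2 + q + 1) ∧
      V0.card = q ^ 2 + q + 1 ∧
      V1.card = m * (q ^ 2 + q + 1) ∧
      (∀ v ∈ V0, G.degree v = m * (q + 1)) ∧
      (∀ v ∈ V1, G.degree v = q + 1) ∧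
      G.diam = 3 := by
  obtain ⟨P, L, _, _, _, _, h⟩ := exists_projectivePlane_order_eq hq
  exact stmt_10_general P L h m hm
end

section
/- For every finite abelian group Γ whose order is 40, 41, or 42, there is no subset S ⊆ Γ of size 7 that is a covering difference set of Γ. Consequently, the maximum order of a finite abelian group admitting a covering difference set of size 7 is 39. -/
/-- `n` is the order of some finite abelian group admitting a covering difference set of
size 7 (a 7-element subset `S` such that every group element is a difference of two
elements of `S`). -/
def HasCoveringSet7 (n : ℕ) : Prop :=
  ∃ (Γ : Type) (_ : AddCommGroup Γ) (_ : Fintype Γ), Fintype.card Γ = n ∧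
    ∃ S : Finset Γ, S.card = 7 ∧ ∀ g : Γ, ∃ t ∈ S, ∃ u ∈ S, g = t - u

/-!
Counting differences, a covering set of size 7 lives in a group of order at most 43, so the orders
40 to 43 have to be excluded.

In a cyclic group one may translate and assume that `0` and `1` belong to the set. The 21 pairwise
cyclic distances have to cover `1, …, ⌊n / 2⌋`, which leaves room for at most `21 - ⌊n / 2⌋ ≤ 1`
repeated distances, and a depth-first search that gives up a branch as soon as this budget is
overdrawn finds no such set.

In a non-cyclic group two primary cyclic factors belong to the same prime `p`. For these orders
this forces order 40, `p = 2`, and a direct factor `ZMod 2`: there are a subgroup `K` of index 2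
and an element `h ∉ K` with `2 • h = 0`. If the set has `a` elements in `K` and `b` outside, then
`K` is covered by the `a (a - 1) + b (b - 1)` differences within the two parts and by `0`, while
the complement is covered by the `2 a b` mixed differences, among which `h = -h` appears twice. So
`20 ≤ a (a - 1) + b (b - 1) + 1` and `21 ≤ 2 a b`, which is impossible for `a + b = 7`.
-/

/-- `S` is a covering difference set: every group element is a difference of two elements
of `S`. -/
def IsCovering {Γ : Type*} [AddGroup Γ] (S : Finset Γ) : Prop :=
  ∀ g : Γ, ∃ t ∈ S, ∃ u ∈ S, g = t - u

namespace IsCovering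

open Finset
open scoped Pointwise

section AddGroup

variable {Γ Γ' : Type*} [AddGroup Γ] [AddGroup Γ'] {S : Finset Γ}

theorem map (hS : IsCovering S) (e : Γ ≃+ Γ') : IsCovering (S.map e.toEquiv.toEmbedding) := by
  intro g
  obtain ⟨t, ht, u, hu, hg⟩ := hS (e.symm g)
  refine ⟨e t, mem_map_of_mem _ ht, e u, mem_map_of_mem _ hu, ?_⟩
  rw [← map_sub, ← hg, e.apply_symm_apply]

theorem exists_zero_mem_mem (hS : IsCovering S) (g : Γ) :
    ∃ T : Finset Γ, #T = #S ∧ IsCovering T ∧ 0 ∈ T ∧ g ∈ T := by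
  obtain ⟨t, ht, u, hu, rfl⟩ := hS g
  have mem {s : Γ} (hs : s ∈ S) : s - u ∈ S.map (Equiv.subRight u).toEmbedding :=
    mem_map_of_mem (Equiv.subRight u).toEmbedding hs
  refine ⟨S.map (Equiv.subRight u).toEmbedding, card_map _, fun g => ?_, ?_, mem ht⟩
  · obtain ⟨a, ha, b, hb, rfl⟩ := hS g
    exact ⟨a - u, mem ha, b - u, mem hb, (sub_sub_sub_cancel_right a b u).symm⟩
  · simpa only [sub_self] using mem hu

theorem natCard_le [Finite Γ] (hS : IsCovering S) : Nat.card Γ ≤ #S * #S - #S + 1 := by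
  classical
  have := Fintype.ofFinite Γ
  have hcover : (univ : Finset Γ) ⊆ insert 0 (S.offDiag.image fun p => p.1 - p.2) := by
    intro g _
    obtain ⟨t, ht, u, hu, rfl⟩ := hS g
    rw [mem_insert, sub_eq_zero, mem_image]
    exact or_iff_not_imp_left.2 fun h => ⟨(t, u), mem_offDiag.2 ⟨ht, hu, h⟩, rfl⟩
  calc Nat.card Γ = #(univ : Finset Γ) := Nat.card_eq_fintype_card
    _ ≤ #(insert 0 (S.offDiag.image fun p => p.1 - p.2)) := card_le_card hcover
    _ ≤ #(S.offDiag.image fun p => p.1 - p.2) + 1 := card_insert_le _ _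
    _ ≤ #S * #S - #S + 1 := by grw [card_image_le, offDiag_card]

end AddGroup

section IndexTwo

variable {Γ : Type*} [AddGroup Γ] [Finite Γ] {S : Finset Γ} {K : AddSubgroup Γ}

open Classical in
theorem natCard_subgroup_le (hS : IsCovering S) (hK : K.index = 2) :
    Nat.card K ≤ #{s ∈ S | s ∈ K}.offDiag + #{s ∈ S | s ∉ K}.offDiag + 1 := by
  have := Fintype.ofFinite Γ
  set A := {s ∈ S | s ∈ K}
  set B := {s ∈ S | s ∉ K}
  have hcover : ({g | g ∈ K} : Finset Γ) ⊆
      insert 0 ((A.offDiag ∪ B.offDiag).image fun p => p.1 - p.2) := by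
    intro g hg
    obtain ⟨t, ht, u, hu, rfl⟩ := hS g
    have htu : t ∈ K ↔ u ∈ K := by
      simpa [sub_eq_add_neg, AddSubgroup.add_mem_iff_of_index_two hK] using hg
    rw [mem_insert, sub_eq_zero, mem_image]
    refine or_iff_not_imp_left.2 fun h => ⟨(t, u), ?_, rfl⟩
    simp only [A, B, mem_union, mem_offDiag, mem_filter]
    tauto
  calc Nat.card K = #({g | g ∈ K} : Finset Γ) := Nat.subtype_card _ (by simp)
    _ ≤ #(insert 0 ((A.offDiag ∪ B.offDiag).image fun p => p.1 - p.2)) := card_le_card hcover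
    _ ≤ #((A.offDiag ∪ B.offDiag).image fun p => p.1 - p.2) + 1 := card_insert_le _ _
    _ ≤ #A.offDiag + #B.offDiag + 1 := by grw [card_image_le, card_union_le]

open Classical in
theorem natCard_subgroup_lt (hS : IsCovering S) (hK : K.index = 2) {h : Γ} (hhK : h ∉ K)
    (hh : 2 • h = 0) : Nat.card K < 2 * (#{s ∈ S | s ∈ K} * #{s ∈ S | s ∉ K}) := by
  have := Fintype.ofFinite Γ
  set A := {s ∈ S | s ∈ K}
  set B := {s ∈ S | s ∉ K}
  set F := A - B with hF
  have mem_or_neg_mem {g : Γ} (hg : g ∉ K) : g ∈ F ∨ -g ∈ F := by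
    obtain ⟨t, ht, u, hu, rfl⟩ := hS g
    have htu : ¬ (t ∈ K ↔ u ∈ K) := by
      simpa [sub_eq_add_neg, AddSubgroup.add_mem_iff_of_index_two hK] using hg
    rw [neg_sub]
    by_cases htK : t ∈ K
    · exact .inl (sub_mem_sub (by grind) (by grind))
    · exact .inr (sub_mem_sub (by grind) (by grind))
  have neg_h : -h = h := by rwa [neg_eq_iff_add_eq_zero, ← two_nsmul]
  have hhF : h ∈ F ∩ -F := by
    have := mem_or_neg_mem hhK
    simpa only [mem_inter, mem_neg', neg_h, and_self, or_self] using this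
  have hcompl : Nat.card K = #({g | g ∉ K} : Finset Γ) := by
    rw [Nat.card_eq_fintype_card, Fintype.card_subtype]
    refine card_bij' (fun g _ => g + h) (fun g _ => g - h) ?_ ?_ ?_ ?_ <;>
      simp [sub_eq_add_neg, AddSubgroup.add_mem_iff_of_index_two hK, hhK]
  calc Nat.card K = #({g | g ∉ K} : Finset Γ) := hcompl
    _ ≤ #(F ∪ -F) := card_le_card fun g hg => by
      simpa only [mem_union, mem_neg'] using mem_or_neg_mem (mem_filter.1 hg).2
    _ < #(F ∪ -F) + #(F ∩ -F) := Nat.lt_add_of_pos_right (card_pos.2 ⟨h, hhF⟩)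
    _ = 2 * #F := by rw [card_union_add_card_inter, card_neg, two_mul]
    _ ≤ 2 * (#A * #B) := by grw [hF, card_sub_le]

theorem natCard_lt_forty_of_index_eq_two (hS : IsCovering S) (hcard : #S = 7)
    (hK : K.index = 2) {h : Γ} (hhK : h ∉ K) (hh : 2 • h = 0) : Nat.card Γ < 40 := by
  classical
  have hle := hS.natCard_subgroup_le hK
  have hlt := hS.natCard_subgroup_lt hK hhK hh
  have hsum := card_filter_add_card_filter_not (s := S) (· ∈ K)
  have hindex := K.card_mul_index
  rw [offDiag_card, offDiag_card] at hle
  rw [hK] at hindex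
  obtain ⟨a, ha⟩ : ∃ a, a = #{s ∈ S | s ∈ K} := ⟨_, rfl⟩
  obtain ⟨b, hb⟩ : ∃ b, b = #{s ∈ S | s ∉ K} := ⟨_, rfl⟩
  rw [← ha, ← hb] at hle hlt hsum
  obtain rfl : b = 7 - a := by lia
  have : a ≤ 7 := by lia
  interval_cases a <;> lia

end IndexTwo

end IsCovering

section PiZMod

variable {Γ ι : Type*} [AddGroup Γ] {n : ι → ℕ}

theorem exists_addSubgroup_index_eq_of_equiv_pi_zmod
    (e : Γ ≃+ ((i : ι) → ZMod (n i))) (i : ι) (hi : n i ≠ 1) :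
    ∃ K : AddSubgroup Γ, K.index = n i ∧ ∃ h ∉ K, n i • h = 0 := by
  classical
  let π : Γ →+ ZMod (n i) := (Pi.evalAddMonoidHom _ i).comp e.toAddMonoidHom
  have hπ : Function.Surjective π := (Function.surjective_eval i).comp e.surjective
  have := ZMod.nontrivial_iff.2 hi
  refine ⟨π.ker, ?_, e.symm (Pi.single i 1), ?_, ?_⟩
  · rw [AddSubgroup.index_ker, AddMonoidHom.range_eq_top.2 hπ, AddSubgroup.card_top,
      Nat.card_zmod]
  · simp [π, AddMonoidHom.mem_ker]
  · rw [← map_nsmul, ← Pi.single_smul, nsmul_one, ZMod.natCast_self, Pi.single_zero, map_zero]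

variable [Finite ι]

theorem isAddCyclic_of_equiv_pi_zmod (e : Γ ≃+ ((i : ι) → ZMod (n i)))
    (hn : Pairwise (Function.onFun Nat.Coprime n)) : IsAddCyclic Γ :=
  have := Fintype.ofFinite ι
  (e.trans (ZMod.prodEquivPi n hn).toAddEquiv.symm).isAddCyclic.2 inferInstance

theorem mul_dvd_natCard_of_equiv_pi_zmod (e : Γ ≃+ ((i : ι) → ZMod (n i)))
    {i j : ι} (hij : i ≠ j) : n i * n j ∣ Nat.card Γ := by
  classical
  have := Fintype.ofFinite ι
  rw [Nat.card_congr e.toEquiv, Nat.card_pi, ← Finset.prod_pair hij]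
  simp only [Nat.card_zmod]
  exact Finset.prod_dvd_prod_of_subset _ _ _ (Finset.subset_univ _)

end PiZMod

theorem exists_prime_sq_dvd_natCard_of_not_isAddCyclic {Γ : Type*} [AddCommGroup Γ] [Finite Γ]
    (hcyc : ¬ IsAddCyclic Γ) (hfree : ∀ p : ℕ, p.Prime → ¬ p ^ 4 ∣ Nat.card Γ) :
    ∃ p : ℕ, p.Prime ∧ p ^ 2 ∣ Nat.card Γ ∧
      ∃ K : AddSubgroup Γ, K.index = p ∧ ∃ h ∉ K, p • h = 0 := by
  obtain ⟨ι, _, p, hp, r, ⟨e⟩⟩ := AddCommGroup.equiv_directSum_zmod_of_finite Γ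
  replace e := e.trans (DirectSum.addEquivProd _)
  obtain ⟨i, j, hij, hcop⟩ : ∃ i j, i ≠ j ∧ ¬ (p i ^ r i).Coprime (p j ^ r j) := by
    by_contra! h
    exact hcyc (isAddCyclic_of_equiv_pi_zmod e fun i j hij => h i j hij)
  have hpij : p i = p j := by
    by_contra h
    exact hcop (((Nat.coprime_primes (hp i) (hp j)).2 h).pow _ _)
  have hri : r i ≠ 0 := fun h => hcop (by simp [h])
  have hrj : r j ≠ 0 := fun h => hcop (by simp [h])
  have hdvd : p i ^ (r i + r j) ∣ Nat.card Γ := by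
    simpa only [pow_add, hpij] using mul_dvd_natCard_of_equiv_pi_zmod e hij
  have hr : r i + r j < 4 := by
    by_contra! h
    exact hfree (p i) (hp i) ((pow_dvd_pow _ h).trans hdvd)
  refine ⟨p i, hp i, (pow_dvd_pow _ (by lia)).trans hdvd, ?_⟩
  obtain hi | hj : r i = 1 ∨ r j = 1 := by lia
  · simpa only [hi, pow_one] using
      exists_addSubgroup_index_eq_of_equiv_pi_zmod e i (by simpa [hi] using (hp i).ne_one)
  · simpa only [hj, pow_one, ← hpij] using
      exists_addSubgroup_index_eq_of_equiv_pi_zmod e j (by simpa [hj] using (hp j).ne_one)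

/-- The length of the shorter arc between the residues `y ≤ x` on a cycle of length `n`. -/
def cyclicDist (n x y : ℕ) : ℕ :=
  min (x - y) (n - (x - y))

/-- The cyclic distances that appear when the entries of the second list are moved one by one to
the first list: those from each moved entry to all entries already there. -/
def newDists (n : ℕ) : List ℕ → List ℕ → List ℕ
  | _, [] => []
  | L, x :: M => L.map (cyclicDist n x) ++ newDists n (x :: L) M

/-- More than `b` entries of `l` are repetitions, that is, they equal an earlier entry or belong to
the set of binary digits of the mask `D`. -/
def RepeatsMoreThan (b D : ℕ) (l : List ℕ) : Prop :=
  (l.toFinset.filter fun d => D.testBit d = false).card + b < l.length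

/-- Reads `d` against the mask `D` of the distances seen so far: a new distance is recorded in the
mask, a repeated one is charged to the budget `b`, and the answer is `true` once the budget is
overdrawn. Otherwise `next` is called with the updated mask and budget. Here and below, explicit
recursors are much faster to evaluate in the kernel than compiled pattern matches. -/
def insertDist (next : ℕ → ℕ → Bool) (d D b : ℕ) : Bool :=
  (D >>> d % 2).rec (next (D ||| 2 ^ d) b) fun _ _ => b.rec true fun c _ => next D c

/-- Reads the distances from `x` to the entries of `L`, as in `insertDist`. -/
def insertDists (n x : ℕ) (next : ℕ → ℕ → Bool) (L : List ℕ) : ℕ → ℕ → Bool :=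
  L.rec next fun y _ ih => insertDist ih (cyclicDist n x y)

/-- Depth-first search verifying that every extension of `L` by `k` of the candidates in `C` meets
more than `b` repeated distances, where `D` is the mask of the distances seen so far. -/
def noExtension (n : ℕ) (C : List ℕ) : ℕ → List ℕ → ℕ → ℕ → Bool :=
  C.rec (fun k _ _ _ => k.rec false fun _ _ => true) fun x _ ih k L D b =>
    k.rec false fun j _ => insertDists n x (ih j (x :: L)) L D b && ih (j + 1) L D b

theorem filter_toFinset_cons_of_testBit {D d : ℕ} {l : List ℕ}
    (h : D.testBit d = true) :
    (d :: l).toFinset.filter (fun c => D.testBit c = false) =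
      l.toFinset.filter fun c => D.testBit c = false := by
  rw [List.toFinset_cons, Finset.filter_insert, if_neg (by simp [h])]

namespace RepeatsMoreThan

variable {b D d : ℕ} {l : List ℕ}

theorem cons_of_lor_two_pow (hl : RepeatsMoreThan b (D ||| 2 ^ d) l) :
    RepeatsMoreThan b D (d :: l) := by
  have hsub : (d :: l).toFinset.filter (fun c => D.testBit c = false) ⊆
      insert d (l.toFinset.filter fun c => (D ||| 2 ^ d).testBit c = false) := by
    intro c
    simp only [List.toFinset_cons, Finset.mem_filter, Finset.mem_insert, Nat.testBit_or,
      Nat.testBit_two_pow, Bool.or_eq_false_iff, decide_eq_false_iff_not]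
    grind
  have := (Finset.card_le_card hsub).trans (Finset.card_insert_le _ _)
  rw [RepeatsMoreThan] at hl ⊢
  rw [List.length_cons]
  lia

theorem zero_cons_of_testBit (h : D.testBit d = true) : RepeatsMoreThan 0 D (d :: l) := by
  rw [RepeatsMoreThan, filter_toFinset_cons_of_testBit h, List.length_cons]
  exact Nat.lt_succ_of_le ((Finset.card_filter_le _ _).trans l.toFinset_card_le)

theorem succ_cons_of_testBit (h : D.testBit d = true) (hl : RepeatsMoreThan b D l) :
    RepeatsMoreThan (b + 1) D (d :: l) := by
  rw [RepeatsMoreThan, filter_toFinset_cons_of_testBit h, List.length_cons]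
  exact Nat.succ_lt_succ hl

theorem of_insertDist {next : ℕ → ℕ → Bool}
    (hnext : ∀ D b, next D b = true → RepeatsMoreThan b D l)
    (h : insertDist next d D b = true) : RepeatsMoreThan b D (d :: l) := by
  have hbit : D.testBit d = decide (D >>> d % 2 = 1) := by
    rw [Nat.testBit_eq_decide_div_mod_eq, Nat.shiftRight_eq_div_pow]
  unfold insertDist at h
  obtain h0 | h1 := Nat.mod_two_eq_zero_or_one (D >>> d)
  · rw [h0] at h
    exact cons_of_lor_two_pow (hnext _ _ h)
  · rw [h1] at h hbit
    cases b with
    | zero => exact zero_cons_of_testBit hbit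
    | succ b => exact succ_cons_of_testBit hbit (hnext _ _ h)

theorem of_insertDists {n x : ℕ} {next : ℕ → ℕ → Bool} {L : List ℕ}
    (hnext : ∀ D b, next D b = true → RepeatsMoreThan b D l)
    (h : insertDists n x next L D b = true) :
    RepeatsMoreThan b D (L.map (cyclicDist n x) ++ l) := by
  induction L generalizing D b with
  | nil => exact hnext D b h
  | cons y L ih => exact of_insertDist (fun _ _ => ih) h

theorem of_noExtension {n : ℕ} {C M : List ℕ} (hM : M.Sublist C) {L : List ℕ}
    (h : noExtension n C M.length L D b = true) : RepeatsMoreThan b D (newDists n L M) := by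
  induction hM generalizing L D b with
  | slnil => simp [noExtension] at h
  | @cons M _ _ _ ih =>
    cases hk : M.length with
    | zero => simp [noExtension, hk] at h
    | succ k =>
      rw [hk] at h ih
      exact ih (Bool.and_eq_true_iff.1 h).2
  | cons_cons _ _ ih =>
    exact of_insertDists (fun _ _ => ih) (Bool.and_eq_true_iff.1 h).1

end RepeatsMoreThan

theorem length_newDists (n : ℕ) (L M : List ℕ) :
    (newDists n L M).length = L.length * M.length + M.length.choose 2 := by
  induction M generalizing L with
  | nil => simp [newDists]
  | cons x M ih =>
    simp only [newDists, List.length_append, List.length_map, ih, List.length_cons,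
      Nat.choose_succ_succ' _ 1, Nat.choose_one_right]
    ring

theorem cyclicDist_mem_newDists {n x y : ℕ} {L M : List ℕ} (hM : M.Pairwise (· < ·))
    (hx : x ∈ M) (hy : y ∈ L ∨ y ∈ M) (hyx : y < x) : cyclicDist n x y ∈ newDists n L M := by
  induction M generalizing L with
  | nil => simp at hx
  | cons z M ih =>
    rw [List.pairwise_cons] at hM
    rw [newDists, List.mem_append, List.mem_map]
    obtain rfl | hxM := List.mem_cons.1 hx
    · have hyL : y ∈ L := by grind
      exact .inl ⟨y, hyL, rfl⟩
    · exact .inr (ih hM.2 hxM (by grind))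

section ZMod

variable {n : ℕ} {S : Finset (ZMod n)}

theorem cyclicDist_val_val [NeZero n] {a b : ZMod n} (h : b.val ≤ a.val) :
    cyclicDist n a.val b.val = (a - b).valMinAbs.natAbs := by
  rw [ZMod.valMinAbs_natAbs_eq_min, ZMod.val_sub h, cyclicDist]

theorem IsCovering.exists_cyclicDist_eq (hS : IsCovering S) {d : ℕ} (hd : 0 < d)
    (hdn : d ≤ n / 2) :
    ∃ a ∈ S, ∃ b ∈ S, b.val < a.val ∧ cyclicDist n a.val b.val = d := by
  have : NeZero n := ⟨by lia⟩
  have hdist : (d : ZMod n).valMinAbs.natAbs = d := by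
    rw [ZMod.valMinAbs_natCast_of_le_half hdn, Int.natAbs_natCast]
  obtain ⟨t, ht, u, hu, htu⟩ := hS d
  rw [htu] at hdist
  obtain h | h | h := lt_trichotomy t.val u.val
  · exact ⟨u, hu, t, ht, h, by
      rw [cyclicDist_val_val h.le, ← neg_sub t u, ZMod.natAbs_valMinAbs_neg, hdist]⟩
  · rw [ZMod.val_injective n h, sub_self, ZMod.valMinAbs_zero, Int.natAbs_zero] at hdist
    exact absurd hdist hd.ne
  · exact ⟨t, ht, u, hu, h, by rw [cyclicDist_val_val h.le, hdist]⟩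

/-- The representatives in `[2, n)` of the elements of `S`, in increasing order. -/
def valsFromTwo (S : Finset (ZMod n)) : List ℕ :=
  (List.range' 2 (n - 2)).filter fun m => (m : ZMod n) ∈ S

theorem valsFromTwo_sublist (S : Finset (ZMod n)) :
    (valsFromTwo S).Sublist (List.range' 2 (n - 2)) :=
  List.filter_sublist

theorem pairwise_valsFromTwo : (valsFromTwo S).Pairwise (· < ·) :=
  (List.pairwise_lt_range' 1).sublist (valsFromTwo_sublist S)

theorem val_mem_valsFromTwo [NeZero n] {a : ZMod n} :
    a.val ∈ valsFromTwo S ↔ a ∈ S ∧ 2 ≤ a.val := by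
  have := a.val_lt
  rw [valsFromTwo, List.mem_filter, List.mem_range'_1, ZMod.natCast_zmod_val, decide_eq_true_iff]
  grind

theorem length_valsFromTwo (hn : 1 < n) (h0 : 0 ∈ S) (h1 : 1 ∈ S) :
    (valsFromTwo S).length + 2 = S.card := by
  have : Fact (1 < n) := ⟨hn⟩
  have himage : S.image ZMod.val = insert 0 (insert 1 (valsFromTwo S).toFinset) := by
    ext m
    simp only [valsFromTwo, Finset.mem_image, Finset.mem_insert, List.mem_toFinset,
      List.mem_filter, List.mem_range'_1, decide_eq_true_iff]
    constructor
    · rintro ⟨a, ha, rfl⟩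
      have := a.val_lt
      rw [ZMod.natCast_zmod_val]
      grind
    · rintro (rfl | rfl | ⟨hm, hmS⟩)
      · exact ⟨0, h0, ZMod.val_zero⟩
      · exact ⟨1, h1, ZMod.val_one n⟩
      · exact ⟨m, hmS, ZMod.val_cast_of_lt (by lia)⟩
  rw [← Finset.card_image_of_injective S (ZMod.val_injective n), himage,
    Finset.card_insert_of_notMem (by simp [valsFromTwo]),
    Finset.card_insert_of_notMem (by simp [valsFromTwo]),
    List.toFinset_card_of_nodup pairwise_valsFromTwo.nodup]

theorem IsCovering.mem_newDists (hS : IsCovering S) {d : ℕ} (hd : 1 < d) (hdn : d ≤ n / 2) :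
    d ∈ newDists n [1, 0] (valsFromTwo S) := by
  have : NeZero n := ⟨by lia⟩
  obtain ⟨a, ha, b, hb, hba, rfl⟩ := hS.exists_cyclicDist_eq (by lia) hdn
  have h2 : 2 ≤ a.val := by
    by_contra! h
    exact hd.not_ge ((min_le_left _ _).trans (by lia))
  refine cyclicDist_mem_newDists pairwise_valsFromTwo (val_mem_valsFromTwo.2 ⟨ha, h2⟩) ?_ hba
  rw [val_mem_valsFromTwo]
  grind

-- The mask `2 = 2 ^ 1` records the distance between the residues `1` and `0`.
theorem not_isCovering_of_noExtension {k b : ℕ} (hn : 1 < n) (hcount : (k + 2).choose 2 ≤ b + n / 2)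
    (hsearch : noExtension n (List.range' 2 (n - 2)) k [1, 0] 2 b = true)
    (hcard : S.card = k + 2) : ¬ IsCovering S := by
  have : Fact (1 < n) := ⟨hn⟩
  intro hS
  obtain ⟨T, hTcard, hT, h0, h1⟩ := hS.exists_zero_mem_mem 1
  have hlen := length_valsFromTwo hn h0 h1
  obtain rfl : k = (valsFromTwo T).length := by lia
  have hrep := RepeatsMoreThan.of_noExtension (valsFromTwo_sublist T) hsearch
  have hnew : Finset.Ioc 1 (n / 2) ⊆
      (newDists n [1, 0] (valsFromTwo T)).toFinset.filter fun d => Nat.testBit 2 d = false := by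
    intro d hd
    rw [Finset.mem_Ioc] at hd
    rw [Finset.mem_filter, List.mem_toFinset]
    exact ⟨hT.mem_newDists hd.1 hd.2, Nat.testBit_two_pow_of_ne (n := 1) hd.1.ne⟩
  have hle := Finset.card_le_card hnew
  rw [RepeatsMoreThan, length_newDists] at hrep
  rw [Nat.card_Ioc] at hle
  simp only [Nat.choose_succ_succ' _ 1, Nat.choose_one_right, List.length_cons,
    List.length_nil] at hcount hrep
  lia

end ZMod

theorem noExtension_forty : noExtension 40 (List.range' 2 38) 5 [1, 0] 2 1 = true := by
  decide +kernel

theorem noExtension_forty_one : noExtension 41 (List.range' 2 39) 5 [1, 0] 2 1 = true := by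
  decide +kernel

theorem noExtension_forty_two : noExtension 42 (List.range' 2 40) 5 [1, 0] 2 0 = true := by
  decide +kernel

theorem noExtension_forty_three : noExtension 43 (List.range' 2 41) 5 [1, 0] 2 0 = true := by
  decide +kernel

theorem not_isCovering_zmod {n : ℕ} (hn : 40 ≤ n) (hn' : n ≤ 43) {S : Finset (ZMod n)}
    (hcard : S.card = 7) : ¬ IsCovering S := by
  obtain rfl | rfl | rfl | rfl : n = 40 ∨ n = 41 ∨ n = 42 ∨ n = 43 := by lia
  · exact not_isCovering_of_noExtension (by simp) (by decide) noExtension_forty hcard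
  · exact not_isCovering_of_noExtension (by simp) (by decide) noExtension_forty_one hcard
  · exact not_isCovering_of_noExtension (by simp) (by decide) noExtension_forty_two hcard
  · exact not_isCovering_of_noExtension (by simp) (by decide) noExtension_forty_three hcard

theorem IsCovering.natCard_lt_forty_of_isAddCyclic {Γ : Type*} [AddGroup Γ] [Finite Γ]
    [IsAddCyclic Γ] {S : Finset Γ} (hS : IsCovering S) (hcard : S.card = 7) :
    Nat.card Γ < 40 := by
  have hle := hS.natCard_le
  rw [hcard] at hle
  by_contra! hlt
  exact not_isCovering_zmod hlt hle ((Finset.card_map _).trans hcard)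
    (hS.map (zmodAddCyclicAddEquiv inferInstance).symm)

theorem IsCovering.natCard_lt_forty_of_not_isAddCyclic {Γ : Type*} [AddCommGroup Γ] [Finite Γ]
    (hcyc : ¬ IsAddCyclic Γ) {S : Finset Γ} (hS : IsCovering S) (hcard : S.card = 7) :
    Nat.card Γ < 40 := by
  have hle := hS.natCard_le
  rw [hcard] at hle
  by_contra! hlt
  have prime_eq_two {p : ℕ} (hp : p.Prime) (h : p ^ 2 ∣ Nat.card Γ) : p = 2 := by
    generalize Nat.card Γ = n at *
    have : p ≤ 6 := by nlinarith [Nat.le_of_dvd (by lia) h]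
    interval_cases p <;> norm_num at hp <;> lia
  obtain ⟨p, hp, hdvd, K, hK, h, hhK, hh⟩ :=
    exists_prime_sq_dvd_natCard_of_not_isAddCyclic hcyc fun p hp h => by
      obtain rfl := prime_eq_two hp ((pow_dvd_pow p (by lia)).trans h)
      lia
  obtain rfl := prime_eq_two hp hdvd
  exact (hS.natCard_lt_forty_of_index_eq_two hcard hK hhK hh).not_ge hlt

theorem IsCovering.natCard_le_thirty_nine {Γ : Type*} [AddCommGroup Γ] [Finite Γ] {S : Finset Γ}
    (hS : IsCovering S) (hcard : S.card = 7) : Nat.card Γ ≤ 39 := by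
  rw [← Nat.lt_succ_iff]
  by_cases hcyc : IsAddCyclic Γ
  · exact hS.natCard_lt_forty_of_isAddCyclic hcard
  · exact hS.natCard_lt_forty_of_not_isAddCyclic hcyc hcard

theorem isCovering_zmod_thirty_nine :
    IsCovering ({0, 1, 2, 4, 13, 18, 33} : Finset (ZMod 39)) := by
  unfold IsCovering
  decide

/-- No finite abelian group of order 40, 41, or 42 admits a covering difference set of
size 7; consequently, the maximum order of a finite abelian group admitting a covering
difference set of size 7 is 39. -/
theorem stmt_16 :
    (∀ (Γ : Type) (_ : AddCommGroup Γ) (_ : Fintype Γ),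
      (Fintype.card Γ = 40 ∨ Fintype.card Γ = 41 ∨ Fintype.card Γ = 42) →
      ¬ ∃ S : Finset Γ, S.card = 7 ∧ ∀ g : Γ, ∃ t ∈ S, ∃ u ∈ S, g = t - u) ∧
    IsGreatest {n : ℕ | HasCoveringSet7 n} 39 := by
  refine ⟨?_, ?_, ?_⟩
  · rintro Γ _ _ hΓ ⟨S, hcard, hS⟩
    have hle := IsCovering.natCard_le_thirty_nine hS hcard
    rw [Nat.card_eq_fintype_card] at hle
    lia
  · exact ⟨ZMod 39, inferInstance, inferInstance, ZMod.card 39,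
      {0, 1, 2, 4, 13, 18, 33}, by decide, isCovering_zmod_thirty_nine⟩
  · rintro n ⟨Γ, _, _, rfl, S, hcard, hS⟩
    rw [← Nat.card_eq_fintype_card]
    exact IsCovering.natCard_le_thirty_nine hS hcard
end

section
/- There exists a finite group Γ of order 40 and a subset S ⊆ Γ of size 7 such that both S and the set of inverses S̄ = {t⁻¹ : t ∈ S} are covering difference sets of Γ. (Such a group is the non-abelian semidirect product of ℤ/5ℤ by ℤ/8ℤ given by the presentation ⟨a, b | a⁵ = b⁸ = 1, b a b⁻¹ = a²⟩, with S = {1, b, b⁴, ba, ba⁻¹b², ab⁻¹, bab²}.) -/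
/-!
For a subset `S` of a group, being a covering set says `S / S = univ`, while the quotients of `S⁻¹`
form the set `S⁻¹ * S`, so in a nonabelian group the two requirements differ. A set of 7 elements
has at most `7 * 6 + 1 = 43` quotients, which leaves room for a group of order 40. In
`ℤ/5ℤ ⋊ ℤ/8ℤ`, where the generator of `ℤ/8ℤ` acts as multiplication by 2, both product sets of the
given `S` are found by enumeration to be the whole group.
-/

open Finset
open scoped Pointwise

section CoveringSet

variable {G : Type*} [Group G]

/-- Covering difference sets of `G`: every element is a quotient of two elements of `S`. -/
def IsCoveringSet (S : Finset G) : Prop :=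
  ∀ g : G, ∃ t ∈ S, ∃ u ∈ S, g = t * u⁻¹

variable [Fintype G] [DecidableEq G] {S : Finset G}

theorem isCoveringSet_iff_div_eq_univ : IsCoveringSet S ↔ S / S = univ := by
  simp only [IsCoveringSet, eq_univ_iff_forall, mem_div, ← div_eq_mul_inv, @eq_comm G _ (_ / _)]

theorem isCoveringSet_inv_iff_inv_mul_eq_univ : IsCoveringSet S⁻¹ ↔ S⁻¹ * S = univ := by
  rw [isCoveringSet_iff_div_eq_univ, div_eq_mul_inv, inv_inv]

end CoveringSet

/-- The homomorphism from `ℤ/mℤ` that sends the generator `1` to `g`, used to define actions of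
`ℤ/mℤ`. -/
def zmodPowHom {G : Type*} [Group G] {m : ℕ} (g : G) (hg : g ^ m = 1) :
    Multiplicative (ZMod m) →* G :=
  AddMonoidHom.toMultiplicativeLeft <|
    ZMod.lift m ⟨zmultiplesHom (Additive G) (.ofMul g), by simp [← ofMul_pow, hg]⟩

instance {N G : Type*} [Group N] [Group G] [Fintype N] [Fintype G] {φ : G →* MulAut N} :
    Fintype (N ⋊[φ] G) :=
  .ofEquiv _ SemidirectProduct.equivProd.symm

/-- The action of `ℤ/mℤ` on `ℤ/nℤ` in which the generator of `ℤ/mℤ` multiplies by `r`. -/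
def zmodMulAction {n m : ℕ} (r : (ZMod n)ˣ) (hr : r ^ m = 1) :
    Multiplicative (ZMod m) →* MulAut (Multiplicative (ZMod n)) :=
  (MulAutMultiplicative (ZMod n)).symm.toMonoidHom.comp (AddAut.mulLeft.comp (zmodPowHom r hr))

/-- The split metacyclic group `⟨a, b ∣ aⁿ = bᵐ = 1, b * a * b⁻¹ = aʳ⟩`, encoded as a semidirect
product of `ℤ/nℤ` by `ℤ/mℤ`. -/
abbrev SplitMetacyclic {n m : ℕ} (r : (ZMod n)ˣ) (hr : r ^ m = 1) : Type :=
  Multiplicative (ZMod n) ⋊[zmodMulAction r hr] Multiplicative (ZMod m)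

namespace SplitMetacyclic

variable {n m : ℕ} {r : (ZMod n)ˣ} {hr : r ^ m = 1}

/-- The generator `a` of the normal factor. -/
def a : SplitMetacyclic r hr := SemidirectProduct.inl (.ofAdd 1)

/-- The generator `b` of the acting factor. -/
def b : SplitMetacyclic r hr := SemidirectProduct.inr (.ofAdd 1)

theorem card_eq [NeZero n] [NeZero m] : Fintype.card (SplitMetacyclic r hr) = n * m := by
  rw [← Nat.card_eq_fintype_card, SemidirectProduct.card]
  simp

end SplitMetacyclic

/-- The group `⟨a, b ∣ a⁵ = b⁸ = 1, b * a * b⁻¹ = a²⟩` of order 40. -/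
abbrev SplitMetacyclicFiveEight : Type :=
  SplitMetacyclic (n := 5) (m := 8) (ZMod.unitOfCoprime 2 (by decide)) (by decide)

namespace SplitMetacyclicFiveEight

open SplitMetacyclic

/-- The 7-element set which, together with its set of inverses, covers the group. -/
def coveringSet : Finset SplitMetacyclicFiveEight :=
  {1, b, b ^ 4, b * a, b * a⁻¹ * b ^ 2, a * b⁻¹, b * a * b ^ 2}

theorem card_coveringSet : coveringSet.card = 7 := by decide +kernel

theorem coveringSet_div_self : coveringSet / coveringSet = univ := by decide +kernel

theorem inv_coveringSet_mul_self : coveringSet⁻¹ * coveringSet = univ := by decide +kernel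

end SplitMetacyclicFiveEight

/-- There is a finite group `Γ` of order 40 together with a 7-element subset `S ⊆ Γ` such
that both `S` and its set of inverses `S̄ = {t⁻¹ : t ∈ S}` are covering difference sets of
`Γ` (every `g ∈ Γ` is of the form `t·u⁻¹` with `t, u` in the set). Such a group is the
nonabelian semidirect product `⟨a, b ∣ a⁵ = b⁸ = 1, b·a·b⁻¹ = a²⟩` with
`S = {1, b, b⁴, ba, ba⁻¹b², ab⁻¹, bab²}`. -/
theorem stmt_18 :
    ∃ (Γ : Type) (_ : Group Γ) (_ : Fintype Γ) (_ : DecidableEq Γ),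
      Fintype.card Γ = 40 ∧
      ∃ S : Finset Γ, S.card = 7 ∧
        (∀ g : Γ, ∃ t ∈ S, ∃ u ∈ S, g = t * u⁻¹) ∧
        (∀ g : Γ, ∃ t ∈ S.image (·⁻¹), ∃ u ∈ S.image (·⁻¹), g = t * u⁻¹) := by
  open SplitMetacyclicFiveEight in
  exact ⟨SplitMetacyclicFiveEight, inferInstance, inferInstance, inferInstance,
    SplitMetacyclic.card_eq, coveringSet, card_coveringSet,
    isCoveringSet_iff_div_eq_univ.2 coveringSet_div_self,
    isCoveringSet_inv_iff_inv_mul_eq_univ.2 inv_coveringSet_mul_self⟩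
end
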